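/- Let n ≥ 3, a = (a_1,…,a_n) ∈ ℂ^n and a' = (a'_1,…,a'_{n−2}) ∈ ℂ^{n−2} with every a_j and a'_k purely imaginary, and let s ∈ ℂ with Re(s) > 0. Then I_{n,n−2;a,a'}(s) = [∏_{1≤j≤n} ∏_{1≤k≤n−2} Γ_ℝ(s+a_j+a'_k)] · (1/(4πi))·∫_{w} [∏_{j=1}^{n} Γ_ℝ(w−a_j) / ∏_{j=1}^{n−2} Γ_ℝ(s+w+a'_j)] dw. -/

import Mathlib

open MeasureTheory Complex

noncomputable section

/-- `Γ_ℝ(s) = π^{-s/2} Γ(s/2)`. -/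
def GammaR (s : ℂ) : ℂ := (Real.pi : ℂ) ^ (-s / 2) * Complex.Gamma (s / 2)

/-- Modified Bessel function of the second kind, via its integral representation. -/
def BesselK (ν : ℂ) (y : ℝ) : ℂ :=
  (1 / 2) * ∫ t in Set.Ioi (0 : ℝ),
    Complex.exp (-((y : ℂ) / 2) * ((t : ℂ) + 1 / (t : ℂ))) * (t : ℂ) ^ ν / (t : ℂ)

/-- Extend a finite real tuple to `ℕ`, defaulting to `1`. -/
def extR {k : ℕ} (t : Fin k → ℝ) : ℕ → ℝ := fun i => if h : i < k then t ⟨i, h⟩ else 1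

/-- Extend a finite real tuple to `ℕ`, defaulting to `0`. -/
def extR0 {k : ℕ} (t : Fin k → ℝ) : ℕ → ℝ := fun i => if h : i < k then t ⟨i, h⟩ else 0

/-- The positive orthant. -/
def posSet (k : ℕ) : Set (Fin k → ℝ) := {t | ∀ j, 0 < t j}

/-- `|a| = a_1 + ⋯ + a_n` (0-based indexing). -/
def sumA (n : ℕ) (a : ℕ → ℂ) : ℂ := ∑ j ∈ Finset.range n, a j

/-- `ã_j = a_{j+1} + a_1/(n-1)` (0-based indexing). -/
def tildeA (n : ℕ) (a : ℕ → ℂ) : ℕ → ℂ := fun j => a (j + 1) + a 0 / ((n : ℂ) - 1)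

/-- The normalized radial part `Ŵ^A_{n,a}` of the class one `GL_n(ℝ)` Whittaker function,
as a function of `(y_1,…,y_{n-1})` (0-based indexing). -/
def WhittAr : ℕ → (ℕ → ℂ) → (ℕ → ℝ) → ℂ
  | 0, _, _ => 1
  | 1, _, _ => 1
  | 2, a, y => 2 * ((y 0 : ℂ) ^ ((a 0 + a 1) / 2)) *
      BesselK ((a 0 - a 1) / 2) (2 * Real.pi * y 0)
  | (n + 3), a, y =>
      ∫ t in posSet (n + 2),
        WhittAr (n + 2) (tildeA (n + 3) a)
            (fun j => y (j + 1) * Real.sqrt (extR t (j + 1) / extR t j)) *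
          (∏ j ∈ Finset.range (n + 2),
            Complex.exp (((-(Real.pi * y j) ^ 2 * extR t j - 1 / extR t j : ℝ) : ℂ)) *
              ((Real.pi * y j : ℝ) : ℂ) ^ ((((n + 2 - j : ℕ) : ℂ) * a 0) / ((n + 2 : ℕ) : ℂ)) *
              ((extR t j : ℝ) : ℂ) ^ ((((n + 3 : ℕ) : ℂ) * a 0) / (2 * ((n + 2 : ℕ) : ℂ)))) *
          ((Real.pi * extR t (n + 1) : ℝ) : ℂ) ^ (-(sumA (n + 3) a) / 2) *
          (∏ j ∈ Finset.range (n + 2), ((extR t j : ℝ) : ℂ))⁻¹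

/-- `Ŵ^A_{n,a}` as a function of the full tuple `(y_1,…,y_n)`. -/
def WhittAhat (n : ℕ) (a : ℕ → ℂ) (y : ℕ → ℝ) : ℂ :=
  ((y (n - 1) : ℝ) : ℂ) ^ sumA n a * WhittAr n a y

/-- The Mellin transform `U_{n,a}` (0-based: `s j` stands for `s_{j+1}`). -/
def Ufun (n : ℕ) (a : ℕ → ℂ) (s : ℕ → ℂ) : ℂ :=
  ∫ y in posSet (n - 1),
    WhittAr n a (extR y) *
      ∏ j ∈ Finset.range (n - 1), ((extR y j : ℝ) : ℂ) ^ s j / ((extR y j : ℝ) : ℂ)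

/-- The normalized radial part `Ŵ^B_{n,b}` of the class one `SO_{2n+1}(ℝ)` Whittaker function. -/
def WhittBr : ℕ → (ℕ → ℂ) → (ℕ → ℝ) → ℂ
  | 0, _, _ => 1
  | 1, b, y => 2 * BesselK (b 0 / 2) (2 * Real.pi * y 0)
  | (n + 2), b, y =>
      ∫ p in (posSet (n + 2) ×ˢ posSet (n + 1)),
        WhittBr (n + 1) b
            (fun j =>
              if j < n then
                y (j + 1) *
                  Real.sqrt (extR p.1 (j + 1) * extR p.2 (j + 1) /
                    (extR p.1 (j + 2) * extR p.2 j))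
              else y (n + 1) * Real.sqrt (extR p.1 (n + 1) / extR p.2 n)) *
          (∏ j ∈ Finset.range (n + 2),
            Complex.exp (((-(Real.pi * y j) ^ 2 * extR p.1 j - 1 / extR p.1 j : ℝ) : ℂ)) *
              ((Real.pi * y j : ℝ) : ℂ) ^ b (n + 1)) *
          (∏ j ∈ Finset.range (n + 1),
            Complex.exp (((-(Real.pi * y j) ^ 2 * (extR p.1 j / extR p.1 (j + 1)) * extR p.2 j -
                  1 / extR p.2 j : ℝ) : ℂ)) *
              ((extR p.1 (j + 1) * extR p.2 j : ℝ) : ℂ) ^ (b (n + 1) / 2)) *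
          ((extR p.1 0 : ℝ) : ℂ) ^ b (n + 1) *
          (∏ j ∈ Finset.range (n + 1), ((extR p.2 j : ℝ) : ℂ))⁻¹ *
          (∏ j ∈ Finset.range (n + 2), ((extR p.1 j : ℝ) : ℂ))⁻¹

/-- The Mellin transform `V_{n,b}` (0-based: `s j` stands for `s_{j+1}`). -/
def Vfun (n : ℕ) (b : ℕ → ℂ) (s : ℕ → ℂ) : ℂ :=
  ∫ y in posSet n,
    WhittBr n b (extR y) *
      ∏ j ∈ Finset.range n, ((extR y j : ℝ) : ℂ) ^ s j / ((extR y j : ℝ) : ℂ)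

/-- Integral over the vertical line `Re z = c`, i.e. `i·∫_ℝ f(c+it) dt`. -/
def VInt (c : ℝ) (f : ℂ → ℂ) : ℂ := Complex.I * ∫ t : ℝ, f (c + t * Complex.I)

/-- Iterated integral over `k` vertical lines with abscissas `c 0, …, c (k-1)`;
the integrand is fed the contour points as a 0-based sequence. -/
def VIntK (k : ℕ) (c : ℕ → ℝ) (f : (ℕ → ℂ) → ℂ) : ℂ :=
  Complex.I ^ k * ∫ t : Fin k → ℝ, f (fun i => (c i : ℂ) + (extR0 t i : ℝ) * Complex.I)



/-- The archimedean `GL_n × GL_m` zeta integral (`m < n`) in torus coordinates. -/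
def zetaGLm (n m : ℕ) (a a' : ℕ → ℂ) (s : ℂ) : ℂ :=
  (2 : ℂ) ^ m * ∫ y in posSet m,
    WhittAhat n a (extR y) * WhittAhat m a' (extR y) *
      ∏ j ∈ Finset.range m,
        ((extR y j : ℝ) : ℂ) ^ (((j + 1 : ℕ) : ℂ) * s) / ((extR y j : ℝ) : ℂ)

/-!
In logarithmic coordinates the Whittaker functions are given by Givental's recursion, and the zeta
integral becomes the pairing of a `GL_{m+2}` with a `GL_m` Whittaker function. The Baxter operator
of the open Toda chain has the `GL_m` function as an eigenfunction with a product of `Γ_ℝ` as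
eigenvalue. Peeling off one Givental kernel of the `GL_{m+2}` function and applying the Baxter
operator leaves a one-dimensional integral over the last coordinate of a pairing of `GL_{m+1}` with
`GL_m`, whose Mellin transform in that coordinate is an explicit product of `Γ_ℝ` by the same
eigenvalue identity and induction on `m`. Parseval's formula then gives the Barnes integral.

All interchanges of integrals are performed on complex numbers paired with a bound of their norm
(`Majorized`): by Tonelli's theorem they hold there without any convergence hypothesis, and
convergence is read off at the end from the bounds, for which the same identities hold.
-/

open scoped ENNReal

/-- Pairs of a complex number and an extended nonnegative bound of its norm, the number being
`0` when the bound is infinite, as a submonoid of `ℂ × ℝ≥0∞`. -/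
def majorizedSubmonoid : Submonoid (ℂ × ℝ≥0∞) where
  carrier := {p | ‖p.1‖ₑ ≤ p.2 ∧ (p.2 = ∞ → p.1 = 0)}
  one_mem' := by simp
  mul_mem' := by
    rintro ⟨z, r⟩ ⟨w, t⟩ ⟨hz, hz'⟩ ⟨hw, hw'⟩
    refine ⟨by simpa [enorm_mul] using mul_le_mul' hz hw, fun h => ?_⟩
    simp only [Prod.mk_mul_mk, ENNReal.mul_eq_top] at h hz' hw' ⊢
    rcases h with ⟨-, h⟩ | ⟨h, -⟩
    · rw [hw' h, mul_zero]
    · rw [hz' h, zero_mul]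

/-- Complex numbers carrying a majorant of their norm. Integrals of functions with values in
this type keep track of absolute convergence, so that Fubini's theorem holds for them without any
integrability hypothesis. -/
def Majorized : Type := majorizedSubmonoid

namespace Majorized

instance : CommMonoid Majorized := inferInstanceAs (CommMonoid majorizedSubmonoid)

instance : MeasurableSpace Majorized := inferInstanceAs (MeasurableSpace majorizedSubmonoid)

instance : MeasurableMul₂ Majorized where
  measurable_mul := by
    have h : Measurable fun p : majorizedSubmonoid × majorizedSubmonoid =>
        ((p.1.1.1 * p.2.1.1, p.1.1.2 * p.2.1.2) : ℂ × ℝ≥0∞) := by fun_prop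
    exact h.subtype_mk (h := fun p => (p.1 * p.2).2)

/-- The underlying complex number. -/
def val (m : Majorized) : ℂ := m.1.1

/-- The bound of the norm. -/
def majorant (m : Majorized) : ℝ≥0∞ := m.1.2

lemma enorm_val_le (m : Majorized) : ‖m.val‖ₑ ≤ m.majorant := m.2.1

lemma val_eq_zero_of_majorant_eq_top {m : Majorized} (h : m.majorant = ∞) : m.val = 0 := m.2.2 h

lemma val_eq_zero_of_majorant_eq_zero {m : Majorized} (h : m.majorant = 0) : m.val = 0 := by
  simpa [h] using m.enorm_val_le

lemma ext_of_ne_top {m m' : Majorized} (h : m.majorant = m'.majorant)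
    (h' : m.majorant ≠ ∞ → m.val = m'.val) : m = m' := by
  refine Subtype.ext (Prod.ext ?_ h)
  by_cases ht : m.majorant = ∞
  · exact (val_eq_zero_of_majorant_eq_top ht).trans
      (val_eq_zero_of_majorant_eq_top (h ▸ ht)).symm
  · exact h' ht

@[simp] lemma val_mul (m m' : Majorized) : (m * m').val = m.val * m'.val := rfl

@[simp] lemma majorant_mul (m m' : Majorized) :
    (m * m').majorant = m.majorant * m'.majorant := rfl

@[simp] lemma val_one : (1 : Majorized).val = 1 := rfl

@[simp] lemma majorant_one : (1 : Majorized).majorant = 1 := rfl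

@[simp] lemma val_prod {ι : Type*} (s : Finset ι) (f : ι → Majorized) :
    (∏ i ∈ s, f i).val = ∏ i ∈ s, (f i).val :=
  map_prod ((MonoidHom.fst ℂ ℝ≥0∞).comp majorizedSubmonoid.subtype) f s

@[simp] lemma majorant_prod {ι : Type*} (s : Finset ι) (f : ι → Majorized) :
    (∏ i ∈ s, f i).majorant = ∏ i ∈ s, (f i).majorant :=
  map_prod ((MonoidHom.snd ℂ ℝ≥0∞).comp majorizedSubmonoid.subtype) f s

@[fun_prop] lemma measurable_val : Measurable val := measurable_fst.comp measurable_subtype_coe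

@[fun_prop] lemma measurable_majorant : Measurable majorant :=
  measurable_snd.comp measurable_subtype_coe

/-- A complex number majorized by its own norm. -/
def of (z : ℂ) : Majorized := ⟨(z, ‖z‖ₑ), le_rfl, fun h => absurd h enorm_ne_top⟩

@[simp] lemma majorant_of (z : ℂ) : (of z).majorant = ‖z‖ₑ := rfl

@[fun_prop] lemma measurable_of : Measurable of := Measurable.subtype_mk (by fun_prop)

/-- The complex exponential majorized by its own norm. -/
def ofExp (θ : ℂ) : Majorized := of (exp θ)

@[simp] lemma val_ofExp (θ : ℂ) : (ofExp θ).val = exp θ := rfl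

@[simp] lemma majorant_ofExp (θ : ℂ) : (ofExp θ).majorant = ‖exp θ‖ₑ := rfl

@[fun_prop] lemma measurable_ofExp : Measurable ofExp := by unfold ofExp; fun_prop

lemma ofExp_add (θ η : ℂ) : ofExp (θ + η) = ofExp θ * ofExp η :=
  ext_of_ne_top (by simp [exp_add, enorm_mul]) fun _ => by simp [exp_add]

@[simp] lemma ofExp_zero : ofExp 0 = 1 := ext_of_ne_top (by simp) fun _ => by simp

section Integral

variable {X Y Z : Type*} [MeasureSpace X] [MeasureSpace Y] [MeasurableSpace Z]

open Classical in
/-- The integral of a function with values in majorized complex numbers: its majorant is the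
Lebesgue integral of the majorants, and its value is the integral of the values, unless the
majorant is infinite. -/
def majIntegral (f : X → Majorized) : Majorized :=
  ⟨(if ∫⁻ x, (f x).majorant = ∞ then 0 else ∫ x, (f x).val, ∫⁻ x, (f x).majorant), by
    split_ifs with h
    · exact ⟨by simp [h], fun _ => rfl⟩
    · exact ⟨(enorm_integral_le_lintegral_enorm _).trans
        (lintegral_mono fun x => (f x).enorm_val_le), fun h' => absurd h' h⟩⟩

@[simp] lemma majorant_majIntegral (f : X → Majorized) :
    (majIntegral f).majorant = ∫⁻ x, (f x).majorant := rfl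

lemma val_majIntegral {f : X → Majorized} (h : ∫⁻ x, (f x).majorant ≠ ∞) :
    (majIntegral f).val = ∫ x, (f x).val := if_neg h

lemma majIntegral_congr {f g : X → Majorized} (h : ∀ x, f x = g x) :
    majIntegral f = majIntegral g := congrArg majIntegral (funext h)

lemma integrable_val {f : X → Majorized} (hf : Measurable f) (h : ∫⁻ x, (f x).majorant ≠ ∞) :
    Integrable fun x => (f x).val :=
  ⟨(measurable_val.comp hf).aestronglyMeasurable,
    (lintegral_mono fun x => (f x).enorm_val_le).trans_lt h.lt_top⟩

lemma majIntegral_const_mul (c : Majorized) {f : X → Majorized} (hf : Measurable f) :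
    majIntegral (fun x => c * f x) = c * majIntegral f := by
  have hmaj : ∫⁻ x, (c * f x).majorant = c.majorant * ∫⁻ x, (f x).majorant :=
    lintegral_const_mul _ (by fun_prop)
  refine ext_of_ne_top hmaj fun h => ?_
  calc (majIntegral fun x => c * f x).val
      = c.val * ∫ x, (f x).val := (val_majIntegral h).trans (integral_const_mul _ _)
    _ = c.val * (majIntegral f).val := by
      by_cases hi : ∫⁻ x, (f x).majorant = ∞
      · have hc : c.majorant = 0 := by
          by_contra h0
          exact h (hmaj.trans (by rw [hi, ENNReal.mul_top h0]))
        simp [val_eq_zero_of_majorant_eq_zero hc]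
      · rw [val_majIntegral hi]

lemma majIntegral_mul_const (c : Majorized) {f : X → Majorized} (hf : Measurable f) :
    majIntegral (fun x => f x * c) = majIntegral f * c := by
  simp only [mul_comm _ c, majIntegral_const_mul c hf]

lemma majIntegral_comp_measurableEquiv (e : X ≃ᵐ Y) (he : MeasurePreserving e)
    (f : Y → Majorized) : majIntegral (fun x => f (e x)) = majIntegral f := by
  have hmaj : ∫⁻ x, (f (e x)).majorant = ∫⁻ y, (f y).majorant :=
    he.lintegral_comp_emb e.measurableEmbedding fun y => (f y).majorant
  refine ext_of_ne_top hmaj fun h => ?_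
  rw [majorant_majIntegral] at h
  rw [val_majIntegral h, val_majIntegral (hmaj ▸ h)]
  exact he.integral_comp e.measurableEmbedding fun y => (f y).val

@[fun_prop] lemma measurable_majIntegral [SFinite (volume : Measure X)] {f : Z → X → Majorized}
    (hf : Measurable fun p : Z × X => f p.1 p.2) : Measurable fun z => majIntegral (f z) := by
  have hmaj : Measurable fun z => ∫⁻ x, (f z x).majorant :=
    Measurable.lintegral_prod_right (f := fun z x => (f z x).majorant) (measurable_majorant.comp hf)
  have hval : Measurable fun z => ∫ x, (f z x).val :=
    (StronglyMeasurable.integral_prod_right (f := fun z x => (f z x).val)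
      (measurable_val.comp hf).stronglyMeasurable).measurable
  exact Measurable.subtype_mk (.prodMk
    (.ite (hmaj (measurableSet_singleton ∞)) measurable_const hval) hmaj)

lemma majIntegral_prod [SFinite (volume : Measure X)] [SFinite (volume : Measure Y)]
    {f : X × Y → Majorized} (hf : Measurable f) :
    majIntegral f = majIntegral fun x => majIntegral fun y => f (x, y) := by
  have hmaj : ∫⁻ p, (f p).majorant = ∫⁻ x, ∫⁻ y, (f (x, y)).majorant :=
    lintegral_prod _ (by fun_prop)
  refine ext_of_ne_top hmaj fun h => ?_
  have h' : ∫⁻ x, ∫⁻ y, (f (x, y)).majorant ≠ ∞ := hmaj ▸ h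
  have hfin : ∀ᵐ x, ∫⁻ y, (f (x, y)).majorant < ∞ :=
    ae_lt_top (measurable_majorant.comp
      (measurable_majIntegral (f := fun x y => f (x, y)) hf)) h'
  calc (majIntegral f).val = ∫ p, (f p).val := val_majIntegral h
    _ = ∫ x, ∫ y, (f (x, y)).val := integral_prod _ (integrable_val hf h)
    _ = ∫ x, (majIntegral fun y => f (x, y)).val := by
      refine integral_congr_ae ?_
      filter_upwards [hfin] with x hx using (val_majIntegral hx.ne).symm
    _ = _ := (val_majIntegral h').symm

lemma majIntegral_swap [SFinite (volume : Measure X)] [SFinite (volume : Measure Y)]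
    {f : X → Y → Majorized} (hf : Measurable fun p : X × Y => f p.1 p.2) :
    majIntegral (fun x => majIntegral fun y => f x y) =
      majIntegral fun y => majIntegral fun x => f x y := by
  calc _ = majIntegral fun p : X × Y => f p.1 p.2 := (majIntegral_prod hf).symm
    _ = majIntegral fun p : Y × X => f p.2 p.1 :=
      majIntegral_comp_measurableEquiv MeasurableEquiv.prodComm Measure.measurePreserving_swap
        fun p : Y × X => f p.2 p.1
    _ = _ := majIntegral_prod (by fun_prop)

lemma majIntegral_sub_left [AddCommGroup X] [MeasurableAdd X] [MeasurableNeg X]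
    [(volume : Measure X).IsAddLeftInvariant] [(volume : Measure X).IsNegInvariant]
    (c : X) (f : X → Majorized) : majIntegral (fun x => f (c - x)) = majIntegral f :=
  majIntegral_comp_measurableEquiv (.subLeft c) (Measure.measurePreserving_sub_left volume c) f

lemma majIntegral_add_right [AddGroup X] [MeasurableAdd X]
    [(volume : Measure X).IsAddRightInvariant] (c : X) (f : X → Majorized) :
    majIntegral (fun x => f (x + c)) = majIntegral f :=
  majIntegral_comp_measurableEquiv (.addRight c) (measurePreserving_add_right volume c) f

lemma majIntegral_insertNth {n : ℕ} (j : Fin (n + 1)) {f : (Fin (n + 1) → ℝ) → Majorized}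
    (hf : Measurable f) :
    majIntegral f =
      majIntegral fun x : Fin n → ℝ => majIntegral fun y : ℝ => f (j.insertNth y x) := by
  let e := MeasurableEquiv.piFinSuccAbove (fun _ : Fin (n + 1) => ℝ) j
  have he : Measurable fun p => f (e.symm p) := hf.comp e.symm.measurable
  calc majIntegral f = majIntegral fun p : ℝ × (Fin n → ℝ) => f (e.symm p) :=
        (majIntegral_comp_measurableEquiv e.symm
          (volume_preserving_piFinSuccAbove (fun _ : Fin (n + 1) => ℝ) j).symm f).symm
    _ = majIntegral fun y : ℝ => majIntegral fun x : Fin n → ℝ => f (e.symm (y, x)) :=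
        majIntegral_prod he
    _ = _ := majIntegral_swap he

lemma majIntegral_cons {n : ℕ} {f : (Fin (n + 1) → ℝ) → Majorized} (hf : Measurable f) :
    majIntegral f =
      majIntegral fun x : Fin n → ℝ => majIntegral fun y : ℝ => f (Fin.cons y x) := by
  simpa only [Fin.insertNth_zero'] using majIntegral_insertNth 0 hf

lemma majIntegral_snoc {n : ℕ} {f : (Fin (n + 1) → ℝ) → Majorized} (hf : Measurable f) :
    majIntegral f =
      majIntegral fun x : Fin n → ℝ => majIntegral fun y : ℝ => f (Fin.snoc x y) := by
  simpa only [Fin.insertNth_last'] using majIntegral_insertNth (Fin.last n) hf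

lemma majIntegral_of_isEmpty {ι : Type*} [Fintype ι] [IsEmpty ι] (f : (ι → ℝ) → Majorized) :
    majIntegral f = f isEmptyElim := by
  have hvol : (volume : Measure (ι → ℝ)) = .dirac isEmptyElim := Measure.pi_of_empty ..
  refine ext_of_ne_top (by simp [hvol]) fun h => ?_
  rw [val_majIntegral h, hvol, integral_dirac]

end Integral

/-- The statement that `w` is the value of `m`, provided that the majorant of `m` is finite. -/
def EvaluatesTo (m : Majorized) (w : ℂ) : Prop := m.majorant ≠ ∞ → m.val = w

lemma evaluatesTo_ofExp (θ : ℂ) : (ofExp θ).EvaluatesTo (exp θ) := fun _ => rfl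

lemma EvaluatesTo.mul {m m' : Majorized} {w w' : ℂ} (h : m.EvaluatesTo w) (h' : m'.EvaluatesTo w') :
    (m * m').EvaluatesTo (w * w') := by
  intro hfin
  rw [majorant_mul, Ne, ENNReal.mul_eq_top, not_or] at hfin
  by_cases hm : m.majorant = ∞
  · have h0 : m'.majorant = 0 := by simpa [hm] using hfin.2
    simp [← h' (by simp [h0]), val_eq_zero_of_majorant_eq_zero h0]
  by_cases hm' : m'.majorant = ∞
  · have h0 : m.majorant = 0 := by simpa [hm'] using hfin.1
    simp [← h hm, val_eq_zero_of_majorant_eq_zero h0]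
  · rw [val_mul, h hm, h' hm']

lemma EvaluatesTo.majIntegral {X : Type*} [MeasureSpace X] {m : X → Majorized} {w : X → ℂ}
    (hm : Measurable m) (h : ∀ x, (m x).EvaluatesTo (w x)) :
    (majIntegral m).EvaluatesTo (∫ x, w x) := by
  intro hfin
  rw [val_majIntegral hfin]
  refine integral_congr_ae ?_
  filter_upwards [ae_lt_top (measurable_majorant.comp hm) hfin] with x hx using h x hx.ne

end Majorized

open Majorized

/-- The tuple `(e^{-u_1}, …, e^{-u_n}, 0)`: the convention `u_{n+1} = ∞`. -/
def expNegSnoc {n : ℕ} (u : Fin n → ℝ) : Fin (n + 1) → ℝ :=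
  Fin.snoc (α := fun _ => ℝ) (fun j => Real.exp (-u j)) 0

@[simp] lemma expNegSnoc_castSucc {n : ℕ} (u : Fin n → ℝ) (j : Fin n) :
    expNegSnoc u j.castSucc = Real.exp (-u j) := Fin.snoc_castSucc ..

@[simp] lemma expNegSnoc_last {n : ℕ} (u : Fin n → ℝ) : expNegSnoc u (Fin.last n) = 0 :=
  Fin.snoc_last ..

lemma expNegSnoc_nonneg {n : ℕ} (u : Fin n → ℝ) (j : Fin (n + 1)) : 0 ≤ expNegSnoc u j := by
  refine Fin.lastCases ?_ (fun i => ?_) j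
  · rw [expNegSnoc_last]
  · rw [expNegSnoc_castSucc]; positivity

@[fun_prop] lemma measurable_expNegSnoc {n : ℕ} :
    Measurable (expNegSnoc : (Fin n → ℝ) → Fin (n + 1) → ℝ) := by
  unfold expNegSnoc; fun_prop

/-- The potential `∑ (e^{x_j - u_j} + e^{u_j - x_{j+1}})` of the raising kernel. -/
def raisingPotential {n : ℕ} (x : Fin (n + 1) → ℝ) (u : Fin n → ℝ) : ℝ :=
  ∑ j : Fin n, (Real.exp (x j.castSucc - u j) + Real.exp (u j - x j.succ))

/-- The potential `∑ (e^{u_j - v_j} + e^{v_j - u_{j+1}})` of the Baxter kernel, the last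
summand having no second term. -/
def baxterPotential {n : ℕ} (v u : Fin n → ℝ) : ℝ :=
  ∑ j : Fin n, (Real.exp (u j - v j) + Real.exp (v j) * expNegSnoc u j.succ)

/-- The kernel of Givental's integral operator from functions of `n` variables to functions of
`n + 1` variables which raises the rank of Whittaker functions. -/
def raisingKernel {n : ℕ} (a : ℂ) (x : Fin (n + 1) → ℝ) (u : Fin n → ℝ) : Majorized :=
  ofExp (-(Real.pi * raisingPotential x u : ℝ) + a / 2 * ((∑ j, x j - ∑ j, u j : ℝ) : ℂ))

/-- The kernel of the Baxter `Q`-operator of the open Toda chain (Gerasimov, Lebedev, Oblezin). -/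
def baxterKernel {n : ℕ} (γ : ℂ) (v u : Fin n → ℝ) : Majorized :=
  ofExp (-(Real.pi * baxterPotential v u : ℝ) + γ / 2 * ((∑ j, u j - ∑ j, v j : ℝ) : ℂ))

/-- Euler's integral for `Γ_ℝ(s)`, in the variable `x` for which the integrand is
`e^{-π e^x} e^{s x / 2}`. -/
def majGammaR (s : ℂ) : Majorized :=
  majIntegral fun x : ℝ => ofExp (-(Real.pi * Real.exp x : ℝ) + s / 2 * (x : ℂ))

@[fun_prop] lemma measurable_raisingKernel {n : ℕ} (a : ℂ) :
    Measurable fun p : (Fin (n + 1) → ℝ) × (Fin n → ℝ) => raisingKernel a p.1 p.2 := by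
  unfold raisingKernel raisingPotential; fun_prop

@[fun_prop] lemma measurable_baxterKernel {n : ℕ} (γ : ℂ) :
    Measurable fun p : (Fin n → ℝ) × (Fin n → ℝ) => baxterKernel γ p.1 p.2 := by
  unfold baxterKernel baxterPotential; fun_prop

/-- Givental's recursive integral for the class one Whittaker function of `GL_n(ℝ)` in
logarithmic coordinates. -/
def whittaker : (n : ℕ) → (ℕ → ℂ) → (Fin n → ℝ) → Majorized
  | 0, _, _ => 1
  | n + 1, a, x => majIntegral fun u : Fin n → ℝ =>
      raisingKernel (a 0) x u * whittaker n (fun j => a (j + 1)) u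

lemma whittaker_succ (n : ℕ) (a : ℕ → ℂ) (x : Fin (n + 1) → ℝ) :
    whittaker (n + 1) a x =
      majIntegral fun u => raisingKernel (a 0) x u * whittaker n (fun j => a (j + 1)) u := rfl

@[fun_prop] lemma measurable_whittaker (n : ℕ) (a : ℕ → ℂ) : Measurable (whittaker n a) := by
  induction n generalizing a with
  | zero => exact measurable_const
  | succ n ih =>
    have := ih fun j => a (j + 1)
    change Measurable fun x =>
      majIntegral fun u => raisingKernel (a 0) x u * whittaker n (fun j => a (j + 1)) u
    fun_prop

lemma whittaker_one (a : ℕ → ℂ) (x : Fin 1 → ℝ) :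
    whittaker 1 a x = ofExp (a 0 / 2 * (x 0 : ℂ)) := by
  rw [whittaker_succ, majIntegral_of_isEmpty]
  simp [raisingKernel, raisingPotential, whittaker]

lemma raisingPotential_eq {n : ℕ} (x : Fin (n + 1) → ℝ) (u : Fin n → ℝ) :
    raisingPotential x u = ∑ j, Real.exp (x j) * expNegSnoc u j +
      ∑ j : Fin n, Real.exp (u j - x j.succ) := by
  simp [raisingPotential, Finset.sum_add_distrib, Fin.sum_univ_castSucc (n := n), Real.exp_sub,
    Real.exp_neg, div_eq_mul_inv]

lemma baxterPotential_eq {n : ℕ} (v u : Fin (n + 1) → ℝ) :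
    baxterPotential v u = ∑ j, Real.exp (u j - v j) +
      ∑ j : Fin n, Real.exp (v j.castSucc - u j.succ) := by
  rw [baxterPotential, Finset.sum_add_distrib, Fin.sum_univ_castSucc (fun j => _ * _)]
  simp [Fin.succ_castSucc, Real.exp_sub, Real.exp_neg, div_eq_mul_inv, -Fin.castSucc_succ]

section Intertwining

variable {n : ℕ}

/-- The smooth minimum `-log (e^{-z_j} + e^{-u_j})`, where `u_{n+1} = ∞`. -/
def softMin (z : Fin (n + 1) → ℝ) (u : Fin n → ℝ) (j : Fin (n + 1)) : ℝ :=
  -Real.log (Real.exp (-z j) + expNegSnoc u j)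

/-- The smooth maximum `log (e^{z_j} + e^{u_j})`. -/
def softMax (z : Fin (n + 1) → ℝ) (u : Fin n → ℝ) (j : Fin n) : ℝ :=
  Real.log (Real.exp (z j.castSucc) + Real.exp (u j))

lemma exp_neg_softMin (z : Fin (n + 1) → ℝ) (u : Fin n → ℝ) (j : Fin (n + 1)) :
    Real.exp (-softMin z u j) = Real.exp (-z j) + expNegSnoc u j := by
  rw [softMin, neg_neg,
    Real.exp_log (add_pos_of_pos_of_nonneg (Real.exp_pos _) (expNegSnoc_nonneg u j))]

lemma exp_softMax (z : Fin (n + 1) → ℝ) (u : Fin n → ℝ) (j : Fin n) :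
    Real.exp (softMax z u j) = Real.exp (z j.castSucc) + Real.exp (u j) :=
  Real.exp_log (by positivity)

lemma softMin_last (z : Fin (n + 1) → ℝ) (u : Fin n → ℝ) :
    softMin z u (Fin.last n) = z (Fin.last n) := by simp [softMin]

lemma softMax_add_softMin_castSucc (z : Fin (n + 1) → ℝ) (u : Fin n → ℝ) (j : Fin n) :
    softMax z u j + softMin z u j.castSucc = z j.castSucc + u j := by
  have h : Real.exp (softMax z u j) =
      Real.exp (z j.castSucc + u j - softMin z u j.castSucc) := by
    rw [sub_eq_add_neg, Real.exp_add _ (-_), exp_neg_softMin, expNegSnoc_castSucc, exp_softMax,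
      mul_add, ← Real.exp_add, ← Real.exp_add]
    ring_nf
  linarith [Real.exp_injective h]

/-- The substitution carrying the product `baxterKernel γ z x * raisingKernel b x u` of kernels,
as a function of `x`, to the product of the same two kernels in the opposite order, as a function
of `v`, times the integrand of Euler's integral, as a function of `y`. -/
def intertwiningPoint (z : Fin (n + 1) → ℝ) (u v : Fin n → ℝ) (y : ℝ) : Fin (n + 1) → ℝ :=
  Fin.cons (y + softMin z u 0) fun j => softMax z u j + softMin z u j.succ - v j

lemma baxterPotential_add_raisingPotential (z : Fin (n + 1) → ℝ) (u v : Fin n → ℝ) (y : ℝ) :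
    baxterPotential z (intertwiningPoint z u v y) +
        raisingPotential (intertwiningPoint z u v y) u =
      Real.exp y + (raisingPotential z v + baxterPotential v u) := by
  set x := intertwiningPoint z u v y with hx
  have hcollect : baxterPotential z x + raisingPotential x u =
      ∑ j, Real.exp (x j - softMin z u j) + ∑ j, Real.exp (softMax z u j - x j.succ) := by
    rw [baxterPotential_eq, raisingPotential_eq]
    simp only [sub_eq_add_neg, Real.exp_add, exp_neg_softMin, exp_softMax, mul_add, add_mul,
      Finset.sum_add_distrib]
    ring
  have hzero : x 0 - softMin z u 0 = y := by simp [hx, intertwiningPoint]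
  have hfst (j : Fin n) : Real.exp (x j.succ - softMin z u j.succ) =
      Real.exp (z j.castSucc - v j) + Real.exp (u j - v j) := by
    have : x j.succ - softMin z u j.succ = softMax z u j + -v j := by
      simp only [hx, intertwiningPoint, Fin.cons_succ]; ring
    rw [this, Real.exp_add, exp_softMax, add_mul, ← Real.exp_add, ← Real.exp_add]
    rfl
  have hsnd (j : Fin n) : Real.exp (softMax z u j - x j.succ) =
      Real.exp (v j - z j.succ) + Real.exp (v j) * expNegSnoc u j.succ := by
    have : softMax z u j - x j.succ = v j + -softMin z u j.succ := by
      simp only [hx, intertwiningPoint, Fin.cons_succ]; ring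
    rw [this, Real.exp_add, exp_neg_softMin, mul_add, ← Real.exp_add]
    rfl
  rw [hcollect, Fin.sum_univ_succ, hzero]
  simp only [hfst, hsnd, raisingPotential, baxterPotential, Finset.sum_add_distrib]
  ring

lemma sum_intertwiningPoint (z : Fin (n + 1) → ℝ) (u v : Fin n → ℝ) (y : ℝ) :
    ∑ j, intertwiningPoint z u v y j = y + ∑ j, z j + ∑ j, u j - ∑ j, v j := by
  have hmin : softMin z u 0 + ∑ j : Fin n, softMin z u j.succ =
      ∑ j : Fin n, softMin z u j.castSucc + z (Fin.last n) := by
    rw [← softMin_last z u, ← Fin.sum_univ_succ, Fin.sum_univ_castSucc]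
  have hmax : ∑ j, softMax z u j + ∑ j : Fin n, softMin z u j.castSucc =
      ∑ j : Fin n, z j.castSucc + ∑ j, u j := by
    simp only [← Finset.sum_add_distrib, softMax_add_softMin_castSucc]
  simp only [intertwiningPoint, Fin.sum_univ_succ, Fin.sum_univ_castSucc z, Fin.cons_zero,
    Fin.cons_succ, Finset.sum_sub_distrib, Finset.sum_add_distrib]
  linarith

lemma baxterKernel_mul_raisingKernel (γ b : ℂ) (z : Fin (n + 1) → ℝ) (u v : Fin n → ℝ) (y : ℝ) :
    baxterKernel γ z (intertwiningPoint z u v y) * raisingKernel b (intertwiningPoint z u v y) u =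
      raisingKernel b z v * baxterKernel γ v u *
        ofExp (-(Real.pi * Real.exp y : ℝ) + (γ + b) / 2 * (y : ℂ)) := by
  have hpot := congrArg (fun r : ℝ => (r : ℂ)) (baxterPotential_add_raisingPotential z u v y)
  simp only [baxterKernel, raisingKernel, ← ofExp_add, sum_intertwiningPoint]
  congr 1
  push_cast at hpot ⊢
  linear_combination (-(Real.pi : ℂ)) * hpot

lemma majIntegral_baxterKernel_mul_raisingKernel (γ b : ℂ) (z : Fin (n + 1) → ℝ) (u : Fin n → ℝ) :
    majIntegral (fun x => baxterKernel γ z x * raisingKernel b x u) =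
      majGammaR (γ + b) * majIntegral fun v => raisingKernel b z v * baxterKernel γ v u := by
  let K (x : Fin (n + 1) → ℝ) : Majorized := baxterKernel γ z x * raisingKernel b x u
  let c (j : Fin n) : ℝ := softMax z u j + softMin z u j.succ
  calc majIntegral K
      = majIntegral fun x' : Fin n → ℝ => majIntegral fun y : ℝ => K (Fin.cons y x') :=
        majIntegral_cons (by fun_prop)
    _ = majIntegral fun v : Fin n → ℝ => majIntegral fun y : ℝ => K (Fin.cons y (c - v)) :=
        (majIntegral_sub_left c _).symm
    _ = majIntegral fun v : Fin n → ℝ => majIntegral fun y : ℝ => K (intertwiningPoint z u v y) :=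
        majIntegral_congr fun v =>
          (majIntegral_add_right (softMin z u 0) fun y => K (Fin.cons y (c - v))).symm
    _ = majIntegral fun v => raisingKernel b z v * baxterKernel γ v u * majGammaR (γ + b) := by
        refine majIntegral_congr fun v => ?_
        simp only [K, baxterKernel_mul_raisingKernel]
        exact majIntegral_const_mul _ (by fun_prop)
    _ = _ := by rw [majIntegral_mul_const _ (by fun_prop), mul_comm]

end Intertwining

lemma majIntegral_baxterKernel_mul_whittaker (n : ℕ) (γ : ℂ) (b : ℕ → ℂ) (z : Fin n → ℝ) :
    majIntegral (fun x => baxterKernel γ z x * whittaker n b x) =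
      (∏ k ∈ Finset.range n, majGammaR (γ + b k)) * whittaker n b z := by
  induction n generalizing b with
  | zero =>
    rw [majIntegral_of_isEmpty]
    simp [baxterKernel, baxterPotential, whittaker]
  | succ n ih =>
    let W := whittaker n fun j => b (j + 1)
    have hW : Measurable W := measurable_whittaker ..
    calc majIntegral (fun x => baxterKernel γ z x * whittaker (n + 1) b x)
        = majIntegral fun x => majIntegral fun u =>
            baxterKernel γ z x * raisingKernel (b 0) x u * W u := by
          refine majIntegral_congr fun x => ?_
          simp only [mul_assoc]
          exact (majIntegral_const_mul _ (by fun_prop)).symm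
      _ = majIntegral fun u =>
            majIntegral (fun x => baxterKernel γ z x * raisingKernel (b 0) x u) * W u := by
          rw [majIntegral_swap (by fun_prop)]
          exact majIntegral_congr fun u => majIntegral_mul_const _ (by fun_prop)
      _ = majGammaR (γ + b 0) * majIntegral fun u => majIntegral fun v =>
            raisingKernel (b 0) z v * (baxterKernel γ v u * W u) := by
          rw [← majIntegral_const_mul _ (by fun_prop)]
          refine majIntegral_congr fun u => ?_
          rw [majIntegral_baxterKernel_mul_raisingKernel, mul_assoc,
            ← majIntegral_mul_const _ (by fun_prop)]
          simp only [mul_assoc]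
      _ = majGammaR (γ + b 0) * majIntegral fun v =>
            raisingKernel (b 0) z v * majIntegral fun u => baxterKernel γ v u * W u := by
          rw [majIntegral_swap (by fun_prop)]
          exact congrArg _ (majIntegral_congr fun v => majIntegral_const_mul _ (by fun_prop))
      _ = majGammaR (γ + b 0) * majIntegral fun v =>
            (∏ k ∈ Finset.range n, majGammaR (γ + b (k + 1))) * (raisingKernel (b 0) z v * W v) :=
          congrArg _ (majIntegral_congr fun v => by rw [ih]; exact mul_left_comm ..)
      _ = _ := by
          rw [majIntegral_const_mul _ (by fun_prop), ← mul_assoc, Finset.prod_range_succ',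
            mul_comm (majGammaR _)]
          rfl

/-- The exponential of the last coordinate of a tuple, and `0` for the empty tuple: the
convention `x_0 = -∞`. -/
def lastExp : {m : ℕ} → (Fin m → ℝ) → ℝ
  | 0, _ => 0
  | m + 1, x => Real.exp (x (Fin.last m))

@[fun_prop] lemma measurable_lastExp {m : ℕ} : Measurable (lastExp (m := m)) := by
  cases m with
  | zero => exact measurable_const
  | succ m => unfold lastExp; fun_prop

/-- The softplus function `log (1 + e^t)`. -/
def softplus (t : ℝ) : ℝ := Real.log (1 + Real.exp t)

lemma exp_softplus (t : ℝ) : Real.exp (softplus t) = 1 + Real.exp t := Real.exp_log (by positivity)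

@[fun_prop] lemma measurable_softplus : Measurable softplus := by unfold softplus; fun_prop

section Recursion

variable {m : ℕ}

/-- The tuple `x` with its last coordinate `t` replaced by `t - log (1 + e^t)`. -/
def shear (x : Fin (m + 1) → ℝ) : Fin (m + 1) → ℝ :=
  Fin.snoc (α := fun _ => ℝ) (Fin.init x) (x (Fin.last m) - softplus (x (Fin.last m)))

@[fun_prop] lemma measurable_shear : Measurable (shear : (Fin (m + 1) → ℝ) → Fin (m + 1) → ℝ) := by
  unfold shear; fun_prop

lemma shear_castSucc (x : Fin (m + 1) → ℝ) (j : Fin m) : shear x j.castSucc = x j.castSucc := by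
  simp [shear, Fin.init]

lemma shear_last (x : Fin (m + 1) → ℝ) :
    shear x (Fin.last m) = x (Fin.last m) - softplus (x (Fin.last m)) := by simp [shear]

lemma sum_shear (x : Fin (m + 1) → ℝ) :
    ∑ j, shear x j = ∑ j, x j - softplus (x (Fin.last m)) := by
  simp only [Fin.sum_univ_castSucc, shear_castSucc, shear_last]
  ring

lemma exp_sub_shear_last (r : ℝ) (x : Fin (m + 1) → ℝ) :
    Real.exp (r - shear x (Fin.last m)) = Real.exp (r - x (Fin.last m)) + Real.exp r := by
  rw [shear_last, ← sub_add, Real.exp_add, exp_softplus, mul_add, ← Real.exp_add,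
    sub_add_cancel, mul_one]

lemma baxterPotential_shear (u z : Fin (m + 1) → ℝ) :
    baxterPotential (shear u) z = baxterPotential u z + lastExp z := by
  simp only [baxterPotential_eq, Fin.sum_univ_castSucc (fun j => Real.exp (z j - _)),
    exp_sub_shear_last, shear_castSucc, lastExp]
  ring

lemma raisingPotential_shear (u : Fin (m + 1) → ℝ) (z : Fin m → ℝ) :
    raisingPotential (shear u) z = raisingPotential u z + lastExp z := by
  cases m with
  | zero => simp [raisingPotential, lastExp]
  | succ m =>
    simp only [raisingPotential, Finset.sum_add_distrib,
      Fin.sum_univ_castSucc (fun j => Real.exp (z j - _)), Fin.succ_castSucc, Fin.succ_last,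
      exp_sub_shear_last, shear_castSucc, lastExp]
    ring

lemma raisingPotential_snoc (z u : Fin m → ℝ) (t : ℝ) :
    raisingPotential (Fin.snoc (α := fun _ => ℝ) z t) u =
      baxterPotential u z + lastExp u * Real.exp (-t) := by
  cases m with
  | zero => simp [raisingPotential, baxterPotential, lastExp]
  | succ m =>
    simp only [raisingPotential, baxterPotential, Fin.sum_univ_castSucc (n := m), Fin.succ_castSucc,
      Fin.succ_last, Nat.succ_eq_add_one, Fin.snoc_castSucc, Fin.snoc_last, expNegSnoc_castSucc,
      expNegSnoc_last, lastExp, Real.exp_sub, Real.exp_neg, div_eq_mul_inv]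
    ring

lemma baxterPotential_snoc (z : Fin m → ℝ) (t : ℝ) (u : Fin (m + 1) → ℝ) :
    baxterPotential (Fin.snoc (α := fun _ => ℝ) z t) u =
      raisingPotential u z + Real.exp (u (Fin.last m) - t) := by
  simp only [baxterPotential_eq, raisingPotential, Fin.sum_univ_castSucc (n := m),
    Fin.snoc_castSucc, Fin.snoc_last, Finset.sum_add_distrib]
  ring

/-- The factor `e^{-π (e^{x_m} + e^{-x_{m+1}})}`. -/
def boundaryWeight (x : Fin (m + 1) → ℝ) : Majorized :=
  ofExp (-(Real.pi * (lastExp (Fin.init x) + Real.exp (-x (Fin.last m))) : ℝ))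

@[fun_prop] lemma measurable_boundaryWeight :
    Measurable (boundaryWeight : (Fin (m + 1) → ℝ) → Majorized) := by
  unfold boundaryWeight; fun_prop

lemma majIntegral_sub_left_eq_majGammaR (s : ℂ) (l : ℝ) :
    majIntegral (fun t : ℝ => ofExp (-(Real.pi * Real.exp (l - t) : ℝ) +
      s / 2 * ((l - t : ℝ) : ℂ))) = majGammaR s :=
  majIntegral_sub_left l fun t : ℝ => ofExp (-(Real.pi * Real.exp t : ℝ) + s / 2 * (t : ℂ))

lemma raisingKernel_snoc_mul_boundaryWeight (a w : ℂ) (u z : Fin (m + 1) → ℝ) (t : ℝ) :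
    raisingKernel a (Fin.snoc (α := fun _ => ℝ) z t) u *
        (boundaryWeight (Fin.snoc (α := fun _ => ℝ) z t) * ofExp (-(w / 2 * (t : ℂ)))) =
      ofExp (-(w / 2 * (softplus (u (Fin.last m)) : ℂ))) * baxterKernel a (shear u) z *
        ofExp (-(Real.pi * Real.exp (softplus (u (Fin.last m)) - t) : ℝ) +
          (w - a) / 2 * ((softplus (u (Fin.last m)) - t : ℝ) : ℂ)) := by
  simp only [raisingKernel, baxterKernel, boundaryWeight, ← ofExp_add, Fin.init_snoc,
    Fin.snoc_last, raisingPotential_snoc, baxterPotential_shear, sum_shear,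
    Fin.sum_univ_castSucc (fun j => (Fin.snoc z t : Fin (m + 2) → ℝ) j), Fin.snoc_castSucc,
    sub_eq_add_neg _ t, Real.exp_add _ (-t), exp_softplus, lastExp]
  congr 1
  push_cast
  ring

lemma baxterKernel_snoc_mul_boundaryWeight (b w : ℂ) (u : Fin (m + 1) → ℝ) (z : Fin m → ℝ)
    (t : ℝ) :
    baxterKernel b (Fin.snoc (α := fun _ => ℝ) z t) u *
        (boundaryWeight (Fin.snoc (α := fun _ => ℝ) z t) * ofExp (-(w / 2 * (t : ℂ)))) =
      ofExp (-(w / 2 * (softplus (u (Fin.last m)) : ℂ))) * raisingKernel b (shear u) z *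
        ofExp (-(Real.pi * Real.exp (softplus (u (Fin.last m)) - t) : ℝ) +
          (w + b) / 2 * ((softplus (u (Fin.last m)) - t : ℝ) : ℂ)) := by
  simp only [raisingKernel, baxterKernel, boundaryWeight, ← ofExp_add, Fin.init_snoc,
    Fin.snoc_last, baxterPotential_snoc, raisingPotential_shear, sum_shear,
    Fin.sum_univ_castSucc (fun j => (Fin.snoc z t : Fin (m + 1) → ℝ) j), Fin.snoc_castSucc,
    sub_eq_add_neg _ t, Real.exp_add _ (-t), exp_softplus]
  congr 1
  push_cast
  ring

lemma majIntegral_raisingKernel_mul_boundaryWeight (a w : ℂ) (u : Fin (m + 1) → ℝ)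
    {G : (Fin (m + 1) → ℝ) → Majorized} (hG : Measurable G) :
    majIntegral (fun x => raisingKernel a x u * (G (Fin.init x) * (boundaryWeight x *
        ofExp (-(w / 2 * (x (Fin.last (m + 1)) : ℂ)))))) =
      majGammaR (w - a) * ofExp (-(w / 2 * (softplus (u (Fin.last m)) : ℂ))) *
        majIntegral fun z => baxterKernel a (shear u) z * G z := by
  rw [majIntegral_snoc (by fun_prop), ← majIntegral_const_mul _ (by fun_prop)]
  refine majIntegral_congr fun z => ?_
  simp only [mul_left_comm _ (G _), raisingKernel_snoc_mul_boundaryWeight, Fin.init_snoc,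
    Fin.snoc_last]
  rw [majIntegral_const_mul _ (by fun_prop), majIntegral_const_mul _ (by fun_prop),
    majIntegral_sub_left_eq_majGammaR]
  ac_rfl

lemma majIntegral_baxterKernel_mul_boundaryWeight (b w : ℂ) (u : Fin (m + 1) → ℝ)
    {G : (Fin m → ℝ) → Majorized} (hG : Measurable G) :
    majIntegral (fun x => baxterKernel b x u * (G (Fin.init x) * (boundaryWeight x *
        ofExp (-(w / 2 * (x (Fin.last m) : ℂ)))))) =
      majGammaR (w + b) * ofExp (-(w / 2 * (softplus (u (Fin.last m)) : ℂ))) *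
        majIntegral fun z => raisingKernel b (shear u) z * G z := by
  rw [majIntegral_snoc (by fun_prop), ← majIntegral_const_mul _ (by fun_prop)]
  refine majIntegral_congr fun z => ?_
  simp only [mul_left_comm _ (G _), baxterKernel_snoc_mul_boundaryWeight, Fin.init_snoc,
    Fin.snoc_last]
  rw [majIntegral_const_mul _ (by fun_prop), majIntegral_const_mul _ (by fun_prop),
    majIntegral_sub_left_eq_majGammaR]
  ac_rfl

end Recursion

/-- The Mellin transform, in the last coordinate, of the product of Whittaker functions on
`GL_{m+1}` and `GL_m` with the boundary weight. -/
def boundaryMellin (m : ℕ) (a b : ℕ → ℂ) (w : ℂ) : Majorized :=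
  majIntegral fun x : Fin (m + 1) → ℝ =>
    whittaker (m + 1) a x * (whittaker m b (Fin.init x) * (boundaryWeight x *
      ofExp (-(w / 2 * (x (Fin.last m) : ℂ)))))

/-- The pairing of two Whittaker functions on `GL_{m+1}`, one of them sheared, which
intermediates between `boundaryMellin (m + 1)` and `boundaryMellin m`. -/
def shearPairing (m : ℕ) (a b : ℕ → ℂ) (w : ℂ) : Majorized :=
  majIntegral fun x : Fin (m + 1) → ℝ =>
    whittaker (m + 1) a x * (whittaker (m + 1) b (shear x) *
      ofExp (-(w / 2 * (softplus (x (Fin.last m)) : ℂ))))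

lemma boundaryMellin_zero (a b : ℕ → ℂ) (w : ℂ) :
    boundaryMellin 0 a b w = majGammaR (w - a 0) := by
  rw [boundaryMellin, majIntegral_snoc (by fun_prop), majIntegral_of_isEmpty,
    ← majIntegral_sub_left_eq_majGammaR _ 0]
  refine majIntegral_congr fun t => ?_
  have hone (x : Fin (0 + 1) → ℝ) : whittaker (0 + 1) a x = _ := whittaker_one a x
  have hlast : (Fin.snoc isEmptyElim t : Fin 1 → ℝ) 0 = t := Fin.snoc_last ..
  simp only [hone]
  simp only [whittaker, one_mul, boundaryWeight, lastExp, ← ofExp_add, zero_add, zero_sub,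
    Fin.last_zero, hlast]
  congr 1
  push_cast
  ring

lemma boundaryMellin_succ (m : ℕ) (a b : ℕ → ℂ) (w : ℂ) :
    boundaryMellin (m + 1) a b w = (∏ k ∈ Finset.range (m + 1), majGammaR (a 0 + b k)) *
      majGammaR (w - a 0) * shearPairing m (fun j => a (j + 1)) b w := by
  let W := whittaker (m + 1) fun j => a (j + 1)
  have hW : Measurable W := measurable_whittaker ..
  let R (x : Fin (m + 2) → ℝ) : Majorized := whittaker (m + 1) b (Fin.init x) *
    (boundaryWeight x * ofExp (-(w / 2 * (x (Fin.last (m + 1)) : ℂ))))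
  have hR : Measurable R := by fun_prop
  calc boundaryMellin (m + 1) a b w
      = majIntegral fun x => majIntegral fun u => raisingKernel (a 0) x u * W u * R x :=
        majIntegral_congr fun x => (majIntegral_mul_const _ (by fun_prop)).symm
    _ = majIntegral fun u => W u * majIntegral fun x => raisingKernel (a 0) x u * R x := by
        rw [majIntegral_swap (by fun_prop)]
        refine majIntegral_congr fun u => ?_
        simp only [mul_comm _ (W u), mul_assoc]
        exact majIntegral_const_mul _ (by fun_prop)
    _ = majIntegral fun u => (∏ k ∈ Finset.range (m + 1), majGammaR (a 0 + b k)) *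
          majGammaR (w - a 0) * (W u * (whittaker (m + 1) b (shear u) *
            ofExp (-(w / 2 * (softplus (u (Fin.last m)) : ℂ))))) := by
        refine majIntegral_congr fun u => ?_
        rw [majIntegral_raisingKernel_mul_boundaryWeight _ _ _ (measurable_whittaker ..),
          majIntegral_baxterKernel_mul_whittaker]
        ac_rfl
    _ = _ := majIntegral_const_mul _ (by fun_prop)

lemma shearPairing_mul_majGammaR (m : ℕ) (a b : ℕ → ℂ) (w : ℂ) :
    shearPairing m a b w * majGammaR (w + b 0) =
      (∏ j ∈ Finset.range (m + 1), majGammaR (b 0 + a j)) *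
        boundaryMellin m a (fun k => b (k + 1)) w := by
  let V := whittaker (m + 1) a
  let W := whittaker m fun k => b (k + 1)
  have hV : Measurable V := measurable_whittaker ..
  have hW : Measurable W := measurable_whittaker ..
  let R (x : Fin (m + 1) → ℝ) : Majorized := W (Fin.init x) *
    (boundaryWeight x * ofExp (-(w / 2 * (x (Fin.last m) : ℂ))))
  have hR : Measurable R := by fun_prop
  symm
  calc (∏ j ∈ Finset.range (m + 1), majGammaR (b 0 + a j)) *
        boundaryMellin m a (fun k => b (k + 1)) w
      = majIntegral fun x => majIntegral (fun u => baxterKernel (b 0) x u * V u) * R x := by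
        rw [boundaryMellin, ← majIntegral_const_mul _ (by fun_prop)]
        simp only [V, majIntegral_baxterKernel_mul_whittaker, mul_assoc]
        rfl
    _ = majIntegral fun x => majIntegral fun u => baxterKernel (b 0) x u * V u * R x :=
        majIntegral_congr fun x => (majIntegral_mul_const _ (by fun_prop)).symm
    _ = majIntegral fun u => V u * majIntegral fun x => baxterKernel (b 0) x u * R x := by
        rw [majIntegral_swap (by fun_prop)]
        refine majIntegral_congr fun u => ?_
        simp only [mul_comm _ (V u), mul_assoc]
        exact majIntegral_const_mul _ (by fun_prop)
    _ = _ := by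
        rw [shearPairing, ← majIntegral_mul_const _ (by fun_prop)]
        refine majIntegral_congr fun u => ?_
        rw [majIntegral_baxterKernel_mul_boundaryWeight _ _ _ hW, whittaker_succ m b]
        simp only [V, W]
        ac_rfl

lemma boundaryMellin_mul_prod_majGammaR (m : ℕ) (a b : ℕ → ℂ) (w : ℂ) :
    boundaryMellin m a b w * ∏ k ∈ Finset.range m, majGammaR (w + b k) =
      (∏ j ∈ Finset.range (m + 1), ∏ k ∈ Finset.range m, majGammaR (a j + b k)) *
        ∏ j ∈ Finset.range (m + 1), majGammaR (w - a j) := by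
  induction m generalizing a b with
  | zero => simp [boundaryMellin_zero]
  | succ m ih =>
    have hK := shearPairing_mul_majGammaR m (fun j => a (j + 1)) b w
    have hJ := ih (fun j => a (j + 1)) fun k => b (k + 1)
    set P := ∏ k ∈ Finset.range m, majGammaR (w + b (k + 1)) with hP
    set Q := ∏ k ∈ Finset.range (m + 1), majGammaR (a 0 + b k) with hQ
    have hsplit : ∏ j ∈ Finset.range (m + 2), ∏ k ∈ Finset.range (m + 1), majGammaR (a j + b k) =
        (∏ j ∈ Finset.range (m + 1), majGammaR (b 0 + a (j + 1))) *
          (∏ j ∈ Finset.range (m + 1), ∏ k ∈ Finset.range m, majGammaR (a (j + 1) + b (k + 1))) *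
            Q := by
      rw [Finset.prod_range_succ', ← hQ]
      simp only [Finset.prod_range_succ' _ m, Finset.prod_mul_distrib, add_comm (b 0)]
      ac_rfl
    rw [boundaryMellin_succ, ← hQ, Finset.prod_range_succ' (fun k => majGammaR (w + b k)), ← hP,
      Finset.prod_range_succ' (fun j => majGammaR (w - a j)), hsplit]
    calc _ = Q * majGammaR (w - a 0) *
          (shearPairing m (fun j => a (j + 1)) b w * majGammaR (w + b 0)) * P := by ac_rfl
      _ = Q * majGammaR (w - a 0) * (∏ j ∈ Finset.range (m + 1), majGammaR (b 0 + a (j + 1))) *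
          (boundaryMellin m (fun j => a (j + 1)) (fun k => b (k + 1)) w * P) := by
        rw [hK]; ac_rfl
      _ = _ := by rw [hJ]; ac_rfl

lemma raisingKernel_snoc_zero_snoc_zero {m : ℕ} (a : ℂ) (x : Fin m → ℝ) (u : Fin (m + 1) → ℝ) :
    raisingKernel a (Fin.snoc (Fin.snoc x 0 : Fin (m + 1) → ℝ) 0) u =
      baxterKernel a (Fin.init u) x * (boundaryWeight u *
        ofExp (-(Real.pi * Real.exp (u (Fin.last m)) : ℝ) - a / 2 * (u (Fin.last m) : ℂ))) := by
  have hpot : raisingPotential (Fin.snoc (Fin.snoc x 0 : Fin (m + 1) → ℝ) 0) u =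
      baxterPotential (Fin.init u) x + lastExp (Fin.init u) + Real.exp (-u (Fin.last m)) +
        Real.exp (u (Fin.last m)) := by
    have hsnoc := baxterPotential_snoc (Fin.init u) (u (Fin.last m)) (Fin.snoc x 0)
    rw [Fin.snoc_init_self, raisingPotential_snoc, Fin.snoc_last, neg_zero, Real.exp_zero, mul_one,
      zero_sub] at hsnoc
    rw [raisingPotential_snoc, hsnoc, neg_zero, Real.exp_zero, mul_one, lastExp]
  have hinit : ∑ j : Fin m, (u j.castSucc : ℂ) = ∑ j, (Fin.init u j : ℂ) := rfl
  simp only [raisingKernel, baxterKernel, boundaryWeight, ← ofExp_add, hpot]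
  congr 1
  push_cast
  simp only [Fin.sum_univ_castSucc, Fin.snoc_castSucc, Fin.snoc_last, ofReal_zero, hinit]
  ring

/-- The integral of the product of Whittaker functions on `GL_{m+2}` and `GL_m`, the last two
variables of the former being set to `0`. -/
def whittakerPairing (m : ℕ) (a b : ℕ → ℂ) : Majorized :=
  majIntegral fun x : Fin m → ℝ =>
    whittaker (m + 2) a (Fin.snoc (Fin.snoc x 0 : Fin (m + 1) → ℝ) 0) * whittaker m b x

/-- The integrand of `boundaryMellin` without the power of the last coordinate. -/
def boundaryProduct (m : ℕ) (a b : ℕ → ℂ) (x : Fin (m + 1) → ℝ) : Majorized :=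
  whittaker (m + 1) a x * (whittaker m b (Fin.init x) * boundaryWeight x)

@[fun_prop] lemma measurable_boundaryProduct (m : ℕ) (a b : ℕ → ℂ) :
    Measurable (boundaryProduct m a b) := by
  unfold boundaryProduct; fun_prop

lemma boundaryMellin_eq (m : ℕ) (a b : ℕ → ℂ) (w : ℂ) :
    boundaryMellin m a b w = majIntegral fun x =>
      boundaryProduct m a b x * ofExp (-(w / 2 * (x (Fin.last m) : ℂ))) := by
  simp only [boundaryMellin, boundaryProduct, mul_assoc]

lemma whittakerPairing_eq (m : ℕ) (a b : ℕ → ℂ) :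
    whittakerPairing m a b = (∏ k ∈ Finset.range m, majGammaR (a 0 + b k)) *
      majIntegral fun u : Fin (m + 1) → ℝ => boundaryProduct m (fun j => a (j + 1)) b u *
        ofExp (-(Real.pi * Real.exp (u (Fin.last m)) : ℝ) - a 0 / 2 * (u (Fin.last m) : ℂ)) := by
  let W := whittaker (m + 1) fun j => a (j + 1)
  have hW : Measurable W := measurable_whittaker ..
  let R (u : Fin (m + 1) → ℝ) : Majorized := boundaryWeight u *
    ofExp (-(Real.pi * Real.exp (u (Fin.last m)) : ℝ) - a 0 / 2 * (u (Fin.last m) : ℂ))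
  have hR : Measurable R := by fun_prop
  calc whittakerPairing m a b
      = majIntegral fun x => majIntegral fun u =>
          baxterKernel (a 0) (Fin.init u) x * R u * W u * whittaker m b x := by
        refine majIntegral_congr fun x => ?_
        rw [whittaker_succ, ← majIntegral_mul_const _ (by fun_prop)]
        simp only [raisingKernel_snoc_zero_snoc_zero]
        rfl
    _ = majIntegral fun u => R u * W u *
          majIntegral fun x => baxterKernel (a 0) (Fin.init u) x * whittaker m b x := by
        rw [majIntegral_swap (by fun_prop)]
        refine majIntegral_congr fun u => ?_
        rw [← majIntegral_const_mul _ (by fun_prop)]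
        exact majIntegral_congr fun x => by ac_rfl
    _ = _ := by
        rw [← majIntegral_const_mul _ (by fun_prop)]
        refine majIntegral_congr fun u => ?_
        simp only [majIntegral_baxterKernel_mul_whittaker, boundaryProduct, R, W]
        ac_rfl

lemma ofReal_exp_cpow (r : ℝ) (z : ℂ) : ((Real.exp r : ℝ) : ℂ) ^ z = exp (r * z) := by
  rw [cpow_def_of_ne_zero (by simp), ← ofReal_log (Real.exp_pos r).le, Real.log_exp]

lemma integral_Ioi_eq_integral_exp (F : ℝ → ℂ) :
    ∫ y in Set.Ioi (0 : ℝ), F y = ∫ x : ℝ, (Real.exp x : ℂ) * F (Real.exp x) := by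
  have h := integral_image_eq_integral_abs_deriv_smul MeasurableSet.univ
    (fun x _ => (Real.hasDerivAt_exp x).hasDerivWithinAt) Real.exp_injective.injOn F
  simpa [Set.image_univ, Real.range_exp, abs_of_pos, Real.exp_pos] using h

lemma mellin_exp_neg_pi_mul {s : ℂ} (hs : 0 < s.re) :
    mellin (fun y : ℝ => exp (-(Real.pi * y : ℝ))) (s / 2) = GammaR s := by
  have h := integral_cpow_mul_exp_neg_mul_Ioi (a := s / 2) (r := Real.pi)
    (by simpa using hs) (by simpa using Real.pi_pos)
  rw [one_div, inv_cpow _ _ (by simp [arg_ofReal_of_nonneg Real.pi_pos.le, Real.pi_ne_zero.symm]),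
    ← cpow_neg, ← neg_div] at h
  rw [GammaR, ← h, mellin]
  simp only [smul_eq_mul, ofReal_mul]

lemma integral_eq_GammaR {s : ℂ} (hs : 0 < s.re) :
    ∫ x : ℝ, exp (-(Real.pi * Real.exp x : ℝ) + s / 2 * (x : ℂ)) = GammaR s := by
  rw [← mellin_exp_neg_pi_mul hs, mellin, integral_Ioi_eq_integral_exp]
  refine integral_congr_ae (.of_forall fun x => ?_)
  dsimp only
  rw [ofReal_exp_cpow, ofReal_exp, smul_eq_mul, ← exp_add, ← exp_add, ofReal_mul, ofReal_exp]
  ring_nf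

lemma GammaR_ne_zero {s : ℂ} (hs : 0 < s.re) : GammaR s ≠ 0 := Gammaℝ_ne_zero_of_re_pos hs

lemma majorant_majGammaR_ne_top {s : ℂ} (hs : 0 < s.re) : (majGammaR s).majorant ≠ ∞ :=
  (Integrable.of_integral_ne_zero ((integral_eq_GammaR hs).trans_ne (GammaR_ne_zero hs))).2.ne

lemma val_majGammaR {s : ℂ} (hs : 0 < s.re) : (majGammaR s).val = GammaR s := by
  rw [majGammaR, val_majIntegral (majorant_majGammaR_ne_top hs)]
  exact integral_eq_GammaR hs

lemma majorant_ofExp_congr {θ η : ℂ} (h : θ.re = η.re) :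
    (ofExp θ).majorant = (ofExp η).majorant := by
  rw [majorant_ofExp, majorant_ofExp, ← ofReal_norm, ← ofReal_norm, norm_exp, norm_exp, h]

lemma majorant_majGammaR_congr {s t : ℂ} (h : s.re = t.re) :
    (majGammaR s).majorant = (majGammaR t).majorant :=
  lintegral_congr fun _ => majorant_ofExp_congr (by simp [h])

lemma GammaR_eq_inv_inv : GammaR = (fun s => (Gammaℝ s)⁻¹)⁻¹ :=
  funext fun s => (inv_inv (Gammaℝ s)).symm

@[fun_prop] lemma measurable_GammaR : Measurable GammaR := by
  rw [GammaR_eq_inv_inv]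
  exact differentiable_Gammaℝ_inv.continuous.measurable.inv

lemma norm_GammaR_mul_norm_sq_le {s : ℂ} (hs : 0 < s.re) :
    ‖GammaR s‖ * ‖s‖ ^ 2 ≤ 4 * Real.pi ^ 2 * ‖GammaR (s + 2 + 2)‖ := by
  have hs2 : 0 < (s + 2).re := by rw [add_re, re_ofNat]; positivity
  have hne {z : ℂ} (hz : 0 < z.re) : z ≠ 0 := fun h => by simp [h] at hz
  have hadd : GammaR (s + 2 + 2) = GammaR s * s / 2 / Real.pi * (s + 2) / 2 / Real.pi := by
    change Gammaℝ (s + 2 + 2) = _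
    rw [Gammaℝ_add_two (hne hs2), Gammaℝ_add_two (hne hs)]
    rfl
  have hnorm : ‖s‖ ≤ ‖s + 2‖ := by
    rw [norm_def, norm_def, normSq_apply, normSq_apply]
    refine Real.sqrt_le_sqrt ?_
    simp only [add_re, re_ofNat, add_im, im_ofNat]
    nlinarith
  calc ‖GammaR s‖ * ‖s‖ ^ 2 ≤ ‖GammaR s‖ * (‖s‖ * ‖s + 2‖) := by rw [sq]; gcongr
    _ = 4 * Real.pi ^ 2 * ‖GammaR (s + 2 + 2)‖ := by
      rw [hadd]
      simp only [norm_mul, norm_div, norm_real, norm_ofNat, Real.norm_of_nonneg Real.pi_pos.le]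
      field_simp
      norm_num

lemma norm_GammaR_le {s : ℂ} {c : ℝ} (hc : 0 < c) (hs : s.re = c) :
    ‖GammaR s‖ ≤ (majGammaR c).majorant.toReal := by
  have hmaj : (majGammaR s).majorant = (majGammaR c).majorant :=
    majorant_majGammaR_congr (by simpa using hs)
  have hle := (majGammaR s).enorm_val_le
  rw [val_majGammaR (hs ▸ hc), hmaj] at hle
  simpa using ENNReal.toReal_mono (majorant_majGammaR_ne_top (by simpa using hc)) hle

lemma integrable_GammaR_vertical {c : ℝ} (hc : 0 < c) :
    Integrable fun t : ℝ => GammaR (c + t * I) := by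
  let C (r : ℝ) : ℝ := (majGammaR r).majorant.toReal
  refine (integrable_inv_one_add_sq.const_mul (C c + 4 * Real.pi ^ 2 * C (c + 4))).mono'
    (Measurable.aestronglyMeasurable (by fun_prop)) (.of_forall fun t => ?_)
  set s : ℂ := c + t * I with hs
  have hre : s.re = c := by simp [hs]
  have ht : t ^ 2 ≤ ‖s‖ ^ 2 := by
    have him : s.im = t := by simp [hs]
    exact him ▸ sq_le_sq.2 ((abs_im_le_norm s).trans (le_abs_self _))
  have hbound : ‖GammaR s‖ ≤ C c := norm_GammaR_le hc hre
  have hdecay : ‖GammaR s‖ * ‖s‖ ^ 2 ≤ 4 * Real.pi ^ 2 * C (c + 4) := by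
    refine (norm_GammaR_mul_norm_sq_le (hre ▸ hc)).trans ?_
    gcongr
    refine norm_GammaR_le (by positivity) ?_
    simp only [add_re, hre, re_ofNat]
    ring
  rw [← div_eq_mul_inv, le_div_iff₀ (by positivity), mul_add, mul_one]
  have := mul_le_mul_of_nonneg_left ht (norm_nonneg (GammaR s))
  linarith

lemma integral_GammaR_mul_exp {c : ℝ} (hc : 0 < c) (y : ℝ) :
    ∫ t : ℝ, GammaR (c + t * I) * exp (-((c + t * I) / 2 * (y : ℂ))) =
      4 * Real.pi * exp (-(Real.pi * Real.exp y : ℝ)) := by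
  let f (x : ℝ) : ℂ := exp (-(Real.pi * x : ℝ))
  let F (t : ℝ) : ℂ := GammaR (c + t * I) * exp (-((c + t * I) / 2 * (y : ℂ)))
  have hpoint (t : ℝ) : ((c / 2 : ℝ) : ℂ) + t * I = (c + ((2 * t : ℝ) : ℂ) * I) / 2 := by
    push_cast; ring
  have hmellin (t : ℝ) : mellin f ((c / 2 : ℝ) + t * I) = GammaR (c + (2 * t : ℝ) * I) := by
    rw [hpoint, mellin_exp_neg_pi_mul (by simpa using hc)]
  have hconv : MellinConvergent f (c / 2 : ℝ) := by
    refine Integrable.of_integral_ne_zero ?_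
    have := (mellin_exp_neg_pi_mul (s := c) (by simpa using hc)).trans_ne
      (GammaR_ne_zero (by simpa using hc))
    simpa [mellin, f] using this
  have hvert : VerticalIntegrable (mellin f) (c / 2) := by
    simp only [VerticalIntegrable, hmellin]
    exact (integrable_GammaR_vertical hc).comp_mul_left' two_ne_zero
  have hinv := mellinInv_mellin_eq (c / 2) f (Real.exp_pos y) hconv hvert (by fun_prop)
  have hintegrand (t : ℝ) : ((Real.exp y : ℝ) : ℂ) ^ (-(((c / 2 : ℝ) : ℂ) + t * I)) •
      mellin f ((c / 2 : ℝ) + t * I) = F (2 * t) := by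
    rw [hmellin, hpoint, ofReal_exp_cpow, smul_eq_mul, mul_comm]
    simp only [F, neg_mul, mul_comm (y : ℂ)]
  rw [mellinInv] at hinv
  simp only [hintegrand, Measure.integral_comp_mul_left F] at hinv
  change ∫ t, F t = 4 * Real.pi * f (Real.exp y)
  rw [← hinv]
  have hpi : (Real.pi : ℂ) ≠ 0 := ofReal_ne_zero.2 Real.pi_ne_zero
  simp only [one_div, mul_inv_rev, abs_inv, Nat.abs_ofNat, real_smul, ofReal_inv, ofReal_ofNat,
    ofReal_mul]
  field_simp
  norm_num

lemma contour_sub (c t : ℝ) (α : ℂ) :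
    (c + t * I - α : ℂ) = (c - α.re : ℝ) + (t - α.im : ℝ) * I := by
  apply Complex.ext <;> simp

lemma integral_GammaR_sub_mul_exp {c : ℝ} {α : ℂ} (h : α.re < c) (y : ℝ) :
    ∫ t : ℝ, GammaR (c + t * I - α) * exp (-((c + t * I) / 2 * (y : ℂ))) =
      4 * Real.pi * exp (-(Real.pi * Real.exp y : ℝ) - α / 2 * (y : ℂ)) := by
  let F (t : ℝ) : ℂ := GammaR ((c - α.re : ℝ) + t * I) *
    exp (-(((c - α.re : ℝ) + t * I) / 2 * (y : ℂ)))
  have hF (t : ℝ) : GammaR (c + t * I - α) * exp (-((c + t * I) / 2 * (y : ℂ))) =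
      F (t - α.im) * exp (-(α / 2 * (y : ℂ))) := by
    simp only [F, ← contour_sub, mul_assoc, ← exp_add]
    ring_nf
  simp only [hF]
  rw [integral_mul_const, integral_sub_right_eq_self F, integral_GammaR_mul_exp (sub_pos.2 h),
    mul_assoc, ← exp_add, sub_eq_add_neg]

/-- The factor `Γ_ℝ(w - α)` of the Mellin inversion formula at the point `w = c + it` of the
contour. -/
def contourGammaR (c : ℝ) (α : ℂ) (t : ℝ) : Majorized := of (GammaR (c + t * I - α))

@[fun_prop] lemma measurable_contourGammaR (c : ℝ) (α : ℂ) : Measurable (contourGammaR c α) := by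
  unfold contourGammaR; fun_prop

lemma majorant_majIntegral_contourGammaR_ne_top {c : ℝ} {α : ℂ} (h : α.re < c) :
    (majIntegral (contourGammaR c α)).majorant ≠ ∞ := by
  have hint : Integrable fun t : ℝ => GammaR (c + t * I - α) := by
    simp only [contour_sub]
    exact (integrable_GammaR_vertical (sub_pos.2 h)).comp_sub_right α.im
  exact hint.2.ne

lemma majorant_majIntegral_contourGammaR_mul_ne_top {c : ℝ} {α : ℂ} (h : α.re < c)
    {L : ℂ → Majorized} (hL : ∀ w w', w.re = w'.re → (L w).majorant = (L w').majorant)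
    (hfin : (L c).majorant ≠ ∞) :
    (majIntegral fun t : ℝ => contourGammaR c α t * L (c + t * I)).majorant ≠ ∞ := by
  have hLc (t : ℝ) : (L (c + t * I)).majorant = (L c).majorant := hL _ _ (by simp)
  simp only [majorant_majIntegral, majorant_mul, hLc]
  rw [lintegral_mul_const _ (by fun_prop)]
  exact ENNReal.mul_ne_top (majorant_majIntegral_contourGammaR_ne_top h) hfin

lemma val_majIntegral_contourGammaR_mul_ofExp {c : ℝ} {α : ℂ} (h : α.re < c) (y : ℝ) :
    (majIntegral fun t : ℝ => contourGammaR c α t * ofExp (-((c + t * I) / 2 * (y : ℂ)))).val =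
      4 * Real.pi * exp (-(Real.pi * Real.exp y : ℝ) - α / 2 * (y : ℂ)) := by
  rw [val_majIntegral, ← integral_GammaR_sub_mul_exp h]
  · rfl
  · exact majorant_majIntegral_contourGammaR_mul_ne_top (L := fun w => ofExp (-(w / 2 * (y : ℂ)))) h
      (fun w w' hw => majorant_ofExp_congr (by simp [hw])) enorm_ne_top

section Parseval

variable {X : Type*} [MeasureSpace X] [SFinite (volume : Measure X)] {κ : X → Majorized}
  {φ : X → ℝ} {c : ℝ} {α : ℂ}

lemma majIntegral_contourGammaR_mul_majIntegral (hκ : Measurable κ) (hφ : Measurable φ) :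
    majIntegral (fun t : ℝ => contourGammaR c α t *
        majIntegral fun x => κ x * ofExp (-((c + t * I) / 2 * (φ x : ℂ)))) =
      majIntegral fun x => κ x *
        majIntegral fun t : ℝ => contourGammaR c α t * ofExp (-((c + t * I) / 2 * (φ x : ℂ))) := by
  calc _ = majIntegral fun t : ℝ => majIntegral fun x => contourGammaR c α t *
        (κ x * ofExp (-((c + t * I) / 2 * (φ x : ℂ)))) :=
        majIntegral_congr fun t => (majIntegral_const_mul _ (by fun_prop)).symm
    _ = _ := by
        rw [majIntegral_swap (by fun_prop)]
        refine majIntegral_congr fun x => ?_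
        rw [← majIntegral_const_mul _ (by fun_prop)]
        simp only [mul_left_comm]

/-- Parseval's formula, for the function of `φ` whose Mellin transform is `Γ_ℝ(w - α)`. -/
lemma majIntegral_mul_ofExp_eq_contour (hκ : Measurable κ) (hφ : Measurable φ) (h : α.re < c)
    (hfin : (majIntegral fun x => κ x * ofExp (-(c / 2 * (φ x : ℂ)))).majorant ≠ ∞) :
    (majIntegral fun x => κ x *
        ofExp (-(Real.pi * Real.exp (φ x) : ℝ) - α / 2 * (φ x : ℂ))).majorant ≠ ∞ ∧
      4 * Real.pi * (majIntegral fun x => κ x *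
        ofExp (-(Real.pi * Real.exp (φ x) : ℝ) - α / 2 * (φ x : ℂ))).val =
      ∫ t : ℝ, GammaR (c + t * I - α) *
        (majIntegral fun x => κ x * ofExp (-((c + t * I) / 2 * (φ x : ℂ)))).val := by
  let N (x : X) : Majorized :=
    majIntegral fun t : ℝ => contourGammaR c α t * ofExp (-((c + t * I) / 2 * (φ x : ℂ)))
  let e (x : X) : Majorized := ofExp (-(Real.pi * Real.exp (φ x) : ℝ) - α / 2 * (φ x : ℂ))
  have hN (x : X) : (N x).val = 4 * Real.pi * (e x).val :=
    val_majIntegral_contourGammaR_mul_ofExp h (φ x)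
  have hcontour := majorant_majIntegral_contourGammaR_mul_ne_top h
    (L := fun w => majIntegral fun x => κ x * ofExp (-(w / 2 * (φ x : ℂ))))
    (fun w w' hw => lintegral_congr fun x => congrArg ((κ x).majorant * ·)
      (majorant_ofExp_congr (by simp [hw]))) hfin
  have hval := val_majIntegral hcontour
  simp only [majIntegral_contourGammaR_mul_majIntegral hκ hφ] at hcontour hval
  have hle (x : X) : (of (4 * Real.pi) * (κ x * e x)).majorant ≤ (κ x * N x).majorant := by
    rw [mul_left_comm, majorant_mul, majorant_mul (κ x)]
    gcongr
    simpa [hN, e, enorm_mul] using (N x).enorm_val_le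
  have hfin4 : (majIntegral fun x => of (4 * Real.pi) * (κ x * e x)).majorant ≠ ∞ :=
    ne_top_of_le_ne_top hcontour (lintegral_mono hle)
  have hmul := majIntegral_const_mul (of (4 * Real.pi)) (f := fun x => κ x * e x) (by fun_prop)
  refine ⟨fun htop => hfin4 ?_, ?_⟩
  · rw [hmul, majorant_mul, htop, ENNReal.mul_top (by simp [Real.pi_ne_zero])]
  · calc _ = (majIntegral fun x => of (4 * Real.pi) * (κ x * e x)).val := by rw [hmul]; rfl
      _ = (majIntegral fun x => κ x * N x).val := by
        rw [val_majIntegral hfin4, val_majIntegral hcontour]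
        refine integral_congr_ae (.of_forall fun x => ?_)
        exact (mul_left_comm ..).trans (congrArg ((κ x).val * ·) (hN x).symm)
      _ = _ := hval

end Parseval

lemma boundaryMellin_eval (m : ℕ) {a b : ℕ → ℂ} {w : ℂ}
    (hab : ∀ j < m + 1, ∀ k < m, 0 < (a j + b k).re) (hwa : ∀ j < m + 1, 0 < (w - a j).re)
    (hwb : ∀ k < m, 0 < (w + b k).re) :
    (boundaryMellin m a b w).majorant ≠ ∞ ∧
      (boundaryMellin m a b w).val =
        (∏ j ∈ Finset.range (m + 1), ∏ k ∈ Finset.range m, GammaR (a j + b k)) *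
          ((∏ j ∈ Finset.range (m + 1), GammaR (w - a j)) /
            ∏ k ∈ Finset.range m, GammaR (w + b k)) := by
  have h := boundaryMellin_mul_prod_majGammaR m a b w
  have hmaj := congrArg majorant h
  have hval := congrArg val h
  simp only [majorant_mul, majorant_prod, val_mul, val_prod] at hmaj hval
  have hab' (j) (hj : j ∈ Finset.range (m + 1)) (k) (hk : k ∈ Finset.range m) :=
    hab j (Finset.mem_range.1 hj) k (Finset.mem_range.1 hk)
  have hwa' (j) (hj : j ∈ Finset.range (m + 1)) := hwa j (Finset.mem_range.1 hj)
  have hwb' (k) (hk : k ∈ Finset.range m) := hwb k (Finset.mem_range.1 hk)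
  constructor
  · intro htop
    have hne : ∏ k ∈ Finset.range m, (majGammaR (w + b k)).majorant ≠ 0 :=
      Finset.prod_ne_zero_iff.2 fun k hk h0 => GammaR_ne_zero (hwb' k hk) <| by
        rw [← val_majGammaR (hwb' k hk), val_eq_zero_of_majorant_eq_zero h0]
    rw [htop, ENNReal.top_mul hne] at hmaj
    refine ENNReal.mul_ne_top (ENNReal.prod_ne_top fun j hj => ENNReal.prod_ne_top fun k hk => ?_)
      (ENNReal.prod_ne_top fun j hj => ?_) hmaj.symm
    · exact majorant_majGammaR_ne_top (hab' j hj k hk)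
    · exact majorant_majGammaR_ne_top (hwa' j hj)
  · have hne : ∏ k ∈ Finset.range m, GammaR (w + b k) ≠ 0 :=
      Finset.prod_ne_zero_iff.2 fun k hk => GammaR_ne_zero (hwb' k hk)
    rw [← mul_div_assoc, eq_div_iff hne]
    simpa +contextual only [val_majGammaR, hab', hwa', hwb', Finset.prod_congr] using hval

lemma whittakerPairing_eval (m : ℕ) {a b : ℕ → ℂ} {c : ℝ}
    (hab : ∀ j < m + 2, ∀ k < m, 0 < (a j + b k).re)
    (hca : ∀ j < m + 2, 0 < ((c : ℂ) - a j).re) :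
    (whittakerPairing m a b).majorant ≠ ∞ ∧
      (whittakerPairing m a b).val =
        (∏ j ∈ Finset.range (m + 2), ∏ k ∈ Finset.range m, GammaR (a j + b k)) *
          ((4 * (Real.pi : ℂ))⁻¹ * ∫ t : ℝ,
            (∏ j ∈ Finset.range (m + 2), GammaR (c + t * I - a j)) /
              ∏ k ∈ Finset.range m, GammaR (c + t * I + b k)) := by
  let a₁ (j : ℕ) : ℂ := a (j + 1)
  have hmellin (t : ℝ) := boundaryMellin_eval m (a := a₁) (b := b) (w := c + t * I)
    (fun j hj => hab (j + 1) (by omega))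
    (fun j hj => by simpa using hca (j + 1) (by omega))
    (fun k hk => by
      simpa [← add_assoc] using add_pos (hca 0 (by omega)) (hab 0 (by omega) k hk))
  have hfin := (hmellin 0).1
  rw [ofReal_zero, zero_mul, add_zero, boundaryMellin_eq] at hfin
  obtain ⟨hfin', hval⟩ := majIntegral_mul_ofExp_eq_contour (κ := boundaryProduct m a₁ b)
    (φ := fun x => x (Fin.last m)) (α := a 0) (by fun_prop) (by fun_prop)
    (by simpa using hca 0 (by omega)) hfin
  have hab0 (k) (hk : k ∈ Finset.range m) : 0 < (a 0 + b k).re :=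
    hab 0 (by omega) k (Finset.mem_range.1 hk)
  rw [whittakerPairing_eq, majorant_mul, majorant_prod, val_mul, val_prod]
  refine ⟨ENNReal.mul_ne_top (ENNReal.prod_ne_top fun k hk =>
    majorant_majGammaR_ne_top (hab0 k hk)) hfin', ?_⟩
  have hpi : 4 * (Real.pi : ℂ) ≠ 0 := by simp [Real.pi_ne_zero]
  have hfactor (t : ℝ) : GammaR (c + t * I - a 0) * (boundaryMellin m a₁ b (c + t * I)).val =
      (∏ j ∈ Finset.range (m + 1), ∏ k ∈ Finset.range m, GammaR (a₁ j + b k)) *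
        ((∏ j ∈ Finset.range (m + 2), GammaR (c + t * I - a j)) /
          ∏ k ∈ Finset.range m, GammaR (c + t * I + b k)) := by
    rw [(hmellin t).2, Finset.prod_range_succ' _ (m + 1)]
    ring
  simp only [← boundaryMellin_eq, hfactor, integral_const_mul] at hval
  rw [(eq_inv_mul_iff_mul_eq₀ hpi).2 hval, Finset.prod_range_succ' _ (m + 1),
    Finset.prod_congr rfl fun k hk => val_majGammaR (hab0 k hk)]
  ring

lemma extR_coe {k : ℕ} (t : Fin k → ℝ) (i : Fin k) : extR t i = t i := by simp [extR]

lemma extR_self {k : ℕ} (t : Fin k → ℝ) : extR t k = 1 := by simp [extR]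

lemma image_exp_univ (k : ℕ) :
    (fun (x : Fin k → ℝ) i => Real.exp (x i)) '' Set.univ = posSet k := by
  ext t
  simp only [Set.image_univ, Set.mem_range, posSet, Set.mem_ofPred_eq]
  refine ⟨?_, fun h => ⟨fun i => Real.log (t i), funext fun i => Real.exp_log (h i)⟩⟩
  rintro ⟨x, rfl⟩ j
  exact Real.exp_pos _

lemma integral_posSet (k : ℕ) (F : (Fin k → ℝ) → ℂ) :
    ∫ t in posSet k, F t =
      ∫ x : Fin k → ℝ, (∏ i, (Real.exp (x i) : ℂ)) * F fun i => Real.exp (x i) := by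
  let D (x : Fin k → ℝ) : (Fin k → ℝ) →L[ℝ] (Fin k → ℝ) :=
    .pi fun i => (Real.exp (x i) • .id ℝ ℝ : ℝ →L[ℝ] ℝ).comp (.proj i)
  have hderiv (x : Fin k → ℝ) : HasFDerivAt (fun (x : Fin k → ℝ) i => Real.exp (x i)) (D x) x :=
    hasFDerivAt_pi.2 fun i => (hasFDerivAt_apply i x).exp
  have hdet (x : Fin k → ℝ) : |(D x).det| = ∏ i, Real.exp (x i) := by
    rw [ContinuousLinearMap.det_pi, Finset.abs_prod]
    simp
  rw [← image_exp_univ, integral_image_eq_integral_abs_det_fderiv_smul volume MeasurableSet.univ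
    (fun x _ => (hderiv x).hasFDerivWithinAt)
    (fun x _ y _ h => funext fun i => Real.exp_injective (congrFun h i)), setIntegral_univ]
  simp only [hdet, real_smul, ofReal_prod]

lemma abs_det_smul_integral_comp_linearMap {k : ℕ} {L : (Fin k → ℝ) →ₗ[ℝ] (Fin k → ℝ)}
    (hL : LinearMap.det L ≠ 0) (f : (Fin k → ℝ) → ℂ) :
    |LinearMap.det L| • ∫ x, f (L x) = ∫ x, f x := by
  have hbij : Function.Bijective L := (LinearMap.equivOfDetNeZero L hL).bijective
  have h := integral_image_eq_integral_abs_det_fderiv_smul volume MeasurableSet.univ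
    (fun x _ => L.toContinuousLinearMap.hasFDerivWithinAt) hbij.1.injOn f
  rw [Set.image_univ, LinearMap.coe_toContinuousLinearMap', hbij.2.range_eq] at h
  simp only [setIntegral_univ] at h
  rw [h, integral_smul, LinearMap.det_toContinuousLinearMap]

/-- The linear map `x ↦ ((x_j - x_{j+1}) / 2)_j`, where `x_{m+1} = 0`: the logarithms of the torus
coordinates `y_j` in terms of the variables of `whittaker`. -/
def halfDiff (m : ℕ) : (Fin m → ℝ) →ₗ[ℝ] (Fin m → ℝ) where
  toFun x j := (x j - (Fin.snoc x 0 : Fin (m + 1) → ℝ) j.succ) / 2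
  map_add' x y := by
    ext j
    by_cases h : (j : ℕ) + 1 < m <;> simp [Fin.snoc, h] <;> ring
  map_smul' c x := by
    ext j
    by_cases h : (j : ℕ) + 1 < m <;> simp [Fin.snoc, h] <;> ring

lemma halfDiff_apply {m : ℕ} (x : Fin m → ℝ) (j : Fin m) :
    halfDiff m x j = (x j - (Fin.snoc x 0 : Fin (m + 1) → ℝ) j.succ) / 2 := rfl

lemma halfDiff_castSucc {m : ℕ} (x : Fin (m + 1) → ℝ) (j : Fin m) :
    halfDiff (m + 1) x j.castSucc = (x j.castSucc - x j.succ) / 2 := by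
  rw [halfDiff_apply, Fin.succ_castSucc, Fin.snoc_castSucc]

lemma halfDiff_last {m : ℕ} (x : Fin (m + 1) → ℝ) :
    halfDiff (m + 1) x (Fin.last m) = x (Fin.last m) / 2 := by
  rw [halfDiff_apply, Fin.succ_last, Fin.snoc_last, sub_zero]

lemma halfDiff_snoc_zero {m : ℕ} (x : Fin m → ℝ) :
    halfDiff (m + 1) (Fin.snoc x 0) = Fin.snoc (halfDiff m x) 0 := by
  ext j
  refine Fin.lastCases ?_ (fun i => ?_) j
  · simp only [halfDiff_last, Fin.snoc_last, zero_div]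
  · rw [halfDiff_castSucc, Fin.snoc_castSucc, Fin.snoc_castSucc, halfDiff_apply]

lemma det_halfDiff (m : ℕ) : LinearMap.det (halfDiff m) = (1 / 2) ^ m := by
  rw [← LinearMap.det_toMatrix', Matrix.det_of_isUpperTriangular]
  · have hdiag (i : Fin m) : LinearMap.toMatrix' (halfDiff m) i i = 1 / 2 := by
      rw [LinearMap.toMatrix'_apply, halfDiff_apply]
      by_cases h : (i : ℕ) + 1 < m <;> simp [Fin.snoc, h, Fin.ext_iff]
    simp [hdiag]
  · intro i j (hij : (j : ℕ) < i)
    rw [LinearMap.toMatrix'_apply, halfDiff_apply]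
    have hne : (i : ℕ) ≠ j := by omega
    have hne' : (i : ℕ) + 1 ≠ j := by omega
    by_cases h : (i : ℕ) + 1 < m <;> simp [Fin.snoc, h, Fin.ext_iff, hne, hne']

lemma integral_comp_halfDiff (m : ℕ) (f : (Fin m → ℝ) → ℂ) :
    ∫ x, f (halfDiff m x) = 2 ^ m * ∫ x, f x := by
  have hdet : LinearMap.det (halfDiff m) ≠ 0 := by rw [det_halfDiff]; positivity
  rw [← abs_det_smul_integral_comp_linearMap hdet f, det_halfDiff, abs_of_pos (by positivity),
    real_smul, ← mul_assoc]
  push_cast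
  rw [← mul_pow]
  norm_num

lemma sum_succ_mul_sub {R : Type*} [CommRing R] {m : ℕ} (x : Fin (m + 1) → R) :
    ∑ j : Fin m, ((j + 1 : ℕ) : R) * (x j.castSucc - x j.succ) =
      ∑ j, x j - (m + 1) * x (Fin.last m) := by
  induction m with
  | zero => simp
  | succ m ih =>
    have h := ih fun j => x j.castSucc
    rw [Fin.sum_univ_castSucc, Fin.sum_univ_castSucc (f := x)]
    simp only [Fin.val_castSucc, Fin.val_last, Fin.succ_last, Fin.succ_castSucc] at h ⊢
    rw [h]
    push_cast
    ring

lemma sum_natSub_mul_sub {R : Type*} [CommRing R] {m : ℕ} (x : Fin (m + 1) → R) :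
    ∑ j : Fin m, ((m - j : ℕ) : R) * (x j.castSucc - x j.succ) =
      (m + 1) * x 0 - ∑ j, x j := by
  induction m with
  | zero => simp
  | succ m ih =>
    have h := ih fun j => x j.succ
    rw [Fin.sum_univ_succ, Fin.sum_univ_succ (f := x)]
    simp only [Fin.val_succ, Nat.reduceSubDiff, Fin.succ_castSucc] at h ⊢
    rw [h]
    simp only [Fin.coe_ofNat_eq_mod, Nat.zero_mod, tsub_zero, Nat.cast_add, Nat.cast_one,
      Fin.castSucc_zero, Fin.succ_zero_eq_one]
    ring

lemma two_mul_sum_natSub {R : Type*} [CommRing R] (m : ℕ) :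
    2 * ∑ j : Fin m, ((m - j : ℕ) : R) = m * (m + 1) := by
  induction m with
  | zero => simp
  | succ m ih =>
    rw [Fin.sum_univ_succ, mul_add]
    simp only [Fin.val_succ, Nat.reduceSubDiff, ih]
    simp only [Fin.coe_ofNat_eq_mod, Nat.zero_mod, tsub_zero, Nat.cast_add, Nat.cast_one]
    ring

lemma sum_succ_mul_halfDiff {m : ℕ} (x : Fin m → ℝ) :
    ∑ j : Fin m, ((j + 1 : ℕ) : ℝ) * halfDiff m x j = (∑ j, x j) / 2 := by
  have h := sum_succ_mul_sub (Fin.snoc x 0 : Fin (m + 1) → ℝ)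
  simp only [Fin.snoc_castSucc, Fin.snoc_last, mul_zero, sub_zero, Fin.sum_univ_castSucc,
    add_zero] at h
  simp only [halfDiff_apply, ← mul_div_assoc, ← Finset.sum_div, h]

lemma whittaker_add_const (n : ℕ) (a : ℕ → ℂ) (c : ℂ) (x : Fin n → ℝ) :
    whittaker n (fun j => a j + c) x =
      ofExp (c / 2 * ((∑ j, x j : ℝ) : ℂ)) * whittaker n a x := by
  induction n generalizing a with
  | zero => simp [whittaker]
  | succ n ih =>
    rw [whittaker_succ, whittaker_succ, ← majIntegral_const_mul _ (by fun_prop)]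
    refine majIntegral_congr fun u => ?_
    rw [ih fun j => a (j + 1), ← mul_assoc, ← mul_assoc, raisingKernel, raisingKernel, ← ofExp_add,
      ← ofExp_add]
    congr 2
    push_cast
    ring

lemma whittaker_two (a : ℕ → ℂ) (x : Fin 2 → ℝ) :
    whittaker 2 a x = majIntegral fun r : ℝ =>
      ofExp (-(Real.pi * (Real.exp (x 0 - r) + Real.exp (r - x 1)) : ℝ) +
        (a 0 / 2 * (x 0 + x 1 - r : ℝ) + a 1 / 2 * (r : ℂ))) := by
  rw [whittaker_succ, majIntegral_snoc (by fun_prop), majIntegral_of_isEmpty]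
  refine majIntegral_congr fun r => ?_
  have hsnoc (x : Fin 0 → ℝ) : (Fin.snoc x r : Fin 1 → ℝ) 0 = r := Fin.snoc_last (n := 0) ..
  rw [whittaker_one, raisingKernel, ← ofExp_add, raisingPotential, Fin.sum_univ_one,
    Fin.sum_univ_one, Fin.sum_univ_two, hsnoc, add_assoc]
  rfl

lemma two_mul_BesselK (ν : ℂ) (p q : ℝ) :
    2 * BesselK ν (2 * Real.pi * Real.exp ((p - q) / 2)) = ∫ r : ℝ,
      exp (-(Real.pi * (Real.exp (p - r) + Real.exp (r - q)) : ℝ) +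
        ν * ((p + q) / 2 - r : ℝ)) := by
  rw [BesselK, ← mul_assoc, mul_one_div_cancel two_ne_zero, one_mul, integral_Ioi_eq_integral_exp,
    ← integral_sub_left_eq_self _ volume ((p + q) / 2)]
  refine integral_congr_ae (.of_forall fun r => ?_)
  have hfst : Real.exp (p - r) = Real.exp ((p - q) / 2) * Real.exp ((p + q) / 2 - r) := by
    rw [← Real.exp_add]; ring_nf
  have hsnd : Real.exp (r - q) = Real.exp ((p - q) / 2) * (Real.exp ((p + q) / 2 - r))⁻¹ := by
    rw [← Real.exp_neg, ← Real.exp_add]; ring_nf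
  have hne : (Real.exp ((p + q) / 2 - r) : ℂ) ≠ 0 := ofReal_ne_zero.2 (Real.exp_ne_zero _)
  dsimp only
  rw [ofReal_exp_cpow, mul_div_cancel₀ _ hne, ← exp_add, hfst, hsnd]
  push_cast
  ring_nf

lemma exp_mul_cpow_mul_cpow_eq {y t p q r : ℝ} (hy : y = Real.exp ((p - q) / 2))
    (ht : t = Real.exp (q - Real.log Real.pi - r)) (μ ν : ℂ) :
    exp ((-(Real.pi * y) ^ 2 * t - 1 / t : ℝ) : ℂ) * ((Real.pi * y : ℝ) : ℂ) ^ μ * (t : ℂ) ^ ν =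
      exp (-(Real.pi * (Real.exp (p - r) + Real.exp (r - q)) : ℝ) +
        (μ * ((Real.log Real.pi : ℝ) + (p - q) / 2) + ν * (q - (Real.log Real.pi : ℝ) - r))) := by
  have hpiy : Real.pi * y = Real.exp (Real.log Real.pi + (p - q) / 2) := by
    rw [Real.exp_add, Real.exp_log Real.pi_pos, hy]
  have hsq : (Real.pi * y) ^ 2 * t = Real.pi * Real.exp (p - r) := by
    nth_rewrite 2 [← Real.exp_log Real.pi_pos]
    rw [hpiy, ht, ← Real.exp_nat_mul, ← Real.exp_add, ← Real.exp_add]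
    push_cast
    ring_nf
  have hinv : 1 / t = Real.pi * Real.exp (r - q) := by
    nth_rewrite 1 [← Real.exp_log Real.pi_pos]
    rw [ht, one_div, ← Real.exp_neg, ← Real.exp_add]
    ring_nf
  rw [neg_mul, hsq, hinv, hpiy, ht, ofReal_exp_cpow, ofReal_exp_cpow, ← exp_add, ← exp_add]
  push_cast
  ring_nf

lemma prod_exp_mul_cpow_mul_cpow_eq {m : ℕ} (hm : m ≠ 0) (α : ℂ) {y t : ℕ → ℝ}
    {x : Fin (m + 1) → ℝ} {u : Fin m → ℝ}
    (hy : ∀ j : Fin m, y j = Real.exp ((x j.castSucc - x j.succ) / 2))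
    (ht : ∀ j : Fin m, t j = Real.exp (x j.succ - Real.log Real.pi - u j)) :
    ∏ j ∈ Finset.range m, exp ((-(Real.pi * y j) ^ 2 * t j - 1 / t j : ℝ) : ℂ) *
        ((Real.pi * y j : ℝ) : ℂ) ^ (((m - j : ℕ) : ℂ) * α / (m : ℂ)) *
        (t j : ℂ) ^ (((m + 1 : ℕ) : ℂ) * α / (2 * (m : ℂ))) =
      exp (-(Real.pi * raisingPotential x u : ℝ) + (α / 2 * ((∑ j, x j - ∑ j, u j : ℝ) : ℂ) -
        α / m / 2 * ((∑ j, u j : ℝ) : ℂ))) := by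
  have hm' : (m : ℂ) ≠ 0 := Nat.cast_ne_zero.2 hm
  rw [Finset.prod_range, Finset.prod_congr rfl fun j _ =>
    exp_mul_cpow_mul_cpow_eq (hy j) (ht j) _ _, ← exp_sum, Finset.sum_add_distrib, raisingPotential,
    Finset.mul_sum, ofReal_sum, Finset.sum_neg_distrib]
  congr 2
  have hlinear (j : Fin m) : ((m - j : ℕ) : ℂ) * α / (m : ℂ) *
        ((Real.log Real.pi : ℝ) + (x j.castSucc - x j.succ) / 2) +
      ((m + 1 : ℕ) : ℂ) * α / (2 * (m : ℂ)) * (x j.succ - (Real.log Real.pi : ℝ) - u j) =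
      α / (2 * m) * (Real.log Real.pi * (2 * ((m - j : ℕ) : ℂ) - (m + 1)) +
        ((m - j : ℕ) : ℂ) * ((x j.castSucc : ℂ) - (x j.succ : ℂ)) +
        (m + 1) * ((x j.succ : ℂ) - (u j : ℂ))) := by
    push_cast
    field_simp
    ring
  have htail : ∑ j : Fin m, (x j.succ : ℂ) = ∑ j, (x j : ℂ) - x 0 := by
    rw [Fin.sum_univ_succ fun j => (x j : ℂ)]; ring
  rw [Finset.sum_congr rfl fun j _ => hlinear j, ← Finset.mul_sum, Finset.sum_add_distrib,
    Finset.sum_add_distrib, ← Finset.mul_sum, ← Finset.mul_sum, Finset.sum_sub_distrib,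
    ← Finset.mul_sum, two_mul_sum_natSub, sum_natSub_mul_sub fun j => (x j : ℂ),
    Finset.sum_sub_distrib, htail]
  simp only [Finset.sum_const, Finset.card_univ, Fintype.card_fin, nsmul_eq_mul]
  push_cast
  field_simp
  ring

lemma sumA_tildeA (n : ℕ) (a : ℕ → ℂ) : sumA (n + 1) (tildeA (n + 2) a) = sumA (n + 2) a := by
  have hne : (n : ℂ) + 1 ≠ 0 := Nat.cast_add_one_ne_zero n
  have hcast : ((n + 2 : ℕ) : ℂ) - 1 = n + 1 := by push_cast; ring
  simp only [sumA, Finset.sum_range_succ' _ (n + 1), tildeA, Finset.sum_add_distrib,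
    Finset.sum_const, Finset.card_range, nsmul_eq_mul, hcast]
  push_cast
  rw [mul_div_cancel₀ _ hne]

lemma ofReal_pi_mul_exp_cpow (q r : ℝ) (z : ℂ) :
    ((Real.pi * Real.exp (q - Real.log Real.pi - r) : ℝ) : ℂ) ^ z = exp (z * (q - r)) := by
  have hexp : Real.pi * Real.exp (q - Real.log Real.pi - r) = Real.exp (q - r) := by
    nth_rewrite 1 [← Real.exp_log Real.pi_pos]
    rw [← Real.exp_add]
    ring_nf
  rw [hexp, ofReal_exp_cpow]
  push_cast
  ring_nf

lemma whittaker_tildeA (n : ℕ) (a : ℕ → ℂ) (u : Fin (n + 2) → ℝ) :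
    whittaker (n + 2) (tildeA (n + 3) a) u =
      ofExp (a 0 / (n + 2 : ℕ) / 2 * ((∑ j, u j : ℝ) : ℂ)) *
        whittaker (n + 2) (fun j => a (j + 1)) u := by
  have hcast : ((n + 3 : ℕ) : ℂ) - 1 = (n + 2 : ℕ) := by push_cast; ring
  rw [← whittaker_add_const, ← hcast]
  rfl

lemma evaluatesTo_whittaker_one (a : ℕ → ℂ) (x : Fin 1 → ℝ) :
    (ofExp (-(sumA 1 a) / 2 * x 0) * whittaker 1 a x).EvaluatesTo 1 := by
  rw [whittaker_one, ← ofExp_add, ← exp_zero]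
  convert evaluatesTo_ofExp _ using 2
  rw [sumA, Finset.sum_range_one]
  ring

lemma evaluatesTo_whittaker_two (a : ℕ → ℂ) {y : ℕ → ℝ} {x : Fin 2 → ℝ}
    (hy : y 0 = Real.exp ((x 0 - x 1) / 2)) :
    (ofExp (-(sumA 2 a) / 2 * x 1) * whittaker 2 a x).EvaluatesTo (WhittAr 2 a y) := by
  rw [whittaker_two, ← majIntegral_const_mul _ (by fun_prop), WhittAr, mul_right_comm, hy,
    two_mul_BesselK, ← integral_mul_const]
  refine EvaluatesTo.majIntegral (by fun_prop) fun r => ?_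
  rw [← ofExp_add, ofReal_exp_cpow, ← exp_add]
  convert evaluatesTo_ofExp _ using 2
  rw [sumA, Finset.sum_range_succ, Finset.sum_range_one]
  push_cast
  ring

/-- The variables `t_j` in the recursion for `WhittAr` in terms of the variables of `whittaker`:
this substitution turns the former recursion into the latter. -/
def recursionPoint {n : ℕ} (x : Fin (n + 1) → ℝ) (u : Fin n → ℝ) : Fin n → ℝ :=
  fun j => Real.exp (x j.succ - Real.log Real.pi - u j)

lemma WhittAr_add_three (n : ℕ) (a : ℕ → ℂ) {y : ℕ → ℝ} {x : Fin (n + 3) → ℝ}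
    (hy : ∀ j : Fin (n + 2), y j = Real.exp ((x j.castSucc - x j.succ) / 2)) :
    WhittAr (n + 3) a y = ∫ u : Fin (n + 2) → ℝ,
      WhittAr (n + 2) (tildeA (n + 3) a) (fun j => y (j + 1) *
          √(extR (recursionPoint x u) (j + 1) / extR (recursionPoint x u) j)) *
        exp (-(Real.pi * raisingPotential x u : ℝ) + (a 0 / 2 * ((∑ j, x j - ∑ j, u j : ℝ) : ℂ) -
          a 0 / (n + 2 : ℕ) / 2 * ((∑ j, u j : ℝ) : ℂ))) *
        exp (-(sumA (n + 3) a) / 2 * (x (Fin.last (n + 2)) - u (Fin.last (n + 1)))) := by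
  rw [WhittAr, integral_posSet,
    ← integral_sub_left_eq_self _ volume fun j : Fin (n + 2) => x j.succ - Real.log Real.pi]
  refine integral_congr_ae (.of_forall fun u => ?_)
  change (∏ j, (recursionPoint x u j : ℂ)) *
    (_ * ((Real.pi * extR (recursionPoint x u) (n + 1) : ℝ) : ℂ) ^ _ *
      (∏ j ∈ Finset.range (n + 2), (extR (recursionPoint x u) j : ℂ))⁻¹) = _
  have hcoe := extR_coe (recursionPoint x u)
  have hne : ∏ j, (recursionPoint x u j : ℂ) ≠ 0 :=
    Finset.prod_ne_zero_iff.2 fun j _ => ofReal_ne_zero.2 (Real.exp_ne_zero _)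
  have hprod := prod_exp_mul_cpow_mul_cpow_eq (m := n + 2) (by omega) (a 0) hy hcoe
  dsimp only
  rw [← hprod, ← ofReal_pi_mul_exp_cpow,
    show extR (recursionPoint x u) (n + 1) = _ from hcoe (Fin.last (n + 1)),
    Finset.prod_range fun j => (extR (recursionPoint x u) j : ℂ),
    Finset.prod_congr rfl fun j _ => congrArg ofReal (hcoe j), mul_comm, inv_mul_cancel_right₀ hne]
  rfl

lemma mul_sqrt_recursionPoint {n : ℕ} {y : ℕ → ℝ} {x : Fin (n + 2) → ℝ} (u : Fin (n + 1) → ℝ)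
    (hy : ∀ j : Fin (n + 1), y j = Real.exp ((x j.castSucc - x j.succ) / 2)) (j : Fin n) :
    y (j + 1) * √(extR (recursionPoint x u) (j + 1) / extR (recursionPoint x u) j) =
      Real.exp ((u j.castSucc - u j.succ) / 2) := by
  rw [← Fin.val_succ, hy, extR_coe, ← Fin.val_castSucc, extR_coe, recursionPoint, recursionPoint,
    ← Real.exp_sub, Real.sqrt_eq_rpow, ← Real.exp_mul, ← Real.exp_add, Fin.succ_castSucc]
  ring_nf

lemma ofExp_mul_raisingKernel_mul_whittaker (n : ℕ) (a : ℕ → ℂ) (S : ℂ) (x : Fin (n + 3) → ℝ)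
    (u : Fin (n + 2) → ℝ) :
    ofExp (S * x (Fin.last (n + 2))) *
        (raisingKernel (a 0) x u * whittaker (n + 2) (fun j => a (j + 1)) u) =
      ofExp (S * u (Fin.last (n + 1))) * whittaker (n + 2) (tildeA (n + 3) a) u *
        ofExp (-(Real.pi * raisingPotential x u : ℝ) + (a 0 / 2 * ((∑ j, x j - ∑ j, u j : ℝ) : ℂ) -
          a 0 / (n + 2 : ℕ) / 2 * ((∑ j, u j : ℝ) : ℂ))) *
        ofExp (S * (x (Fin.last (n + 2)) - u (Fin.last (n + 1)))) := by
  rw [whittaker_tildeA, raisingKernel, ← mul_assoc, ← mul_assoc, mul_right_comm _ (whittaker _ _ _),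
    mul_right_comm _ (whittaker _ _ _), ← ofExp_add, ← ofExp_add, ← ofExp_add, ← ofExp_add]
  congr 2
  ring

theorem evaluatesTo_WhittAr (n : ℕ) (a : ℕ → ℂ) {y : ℕ → ℝ} {x : Fin (n + 1) → ℝ}
    (hy : ∀ j : Fin n, y j = Real.exp ((x j.castSucc - x j.succ) / 2)) :
    (ofExp (-(sumA (n + 1) a) / 2 * x (Fin.last n)) * whittaker (n + 1) a x).EvaluatesTo
      (WhittAr (n + 1) a y) := by
  match n with
  | 0 => exact evaluatesTo_whittaker_one a x
  | 1 => exact evaluatesTo_whittaker_two a (hy 0)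
  | n + 2 =>
    rw [whittaker_succ, ← majIntegral_const_mul _ (by fun_prop), WhittAr_add_three n a hy]
    refine EvaluatesTo.majIntegral (by fun_prop) fun u => ?_
    rw [ofExp_mul_raisingKernel_mul_whittaker]
    refine (EvaluatesTo.mul ?_ (evaluatesTo_ofExp _)).mul (evaluatesTo_ofExp _)
    rw [← sumA_tildeA]
    exact evaluatesTo_WhittAr (n + 1) (tildeA (n + 3) a) (mul_sqrt_recursionPoint u hy)

lemma WhittAhat_succ (n : ℕ) (a : ℕ → ℂ) (y : ℕ → ℝ) :
    WhittAhat (n + 1) a y = ((y n : ℝ) : ℂ) ^ sumA (n + 1) a * WhittAr (n + 1) a y := rfl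

theorem evaluatesTo_WhittAhat (n : ℕ) (a : ℕ → ℂ) {y : ℕ → ℝ} {x : Fin n → ℝ}
    (hy : ∀ j : Fin n, y j = Real.exp (halfDiff n x j)) :
    (whittaker n a x).EvaluatesTo (WhittAhat n a y) := by
  cases n with
  | zero =>
    have hone : WhittAhat 0 a y = exp 0 := by simp [WhittAhat, WhittAr, sumA]
    rw [hone, whittaker, ← ofExp_zero]
    exact evaluatesTo_ofExp 0
  | succ n =>
    have hlast : y n = Real.exp (x (Fin.last n) / 2) := by
      rw [← halfDiff_last, ← hy, Fin.val_last]
    have hinit (j : Fin n) : y j = Real.exp ((x j.castSucc - x j.succ) / 2) := by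
      rw [← halfDiff_castSucc, ← hy, Fin.val_castSucc]
    rw [WhittAhat_succ, hlast, ofReal_exp_cpow]
    convert (evaluatesTo_ofExp _).mul (evaluatesTo_WhittAr n a hinit) using 1
    have hcancel (S : ℂ) (r : ℝ) : ((r / 2 : ℝ) : ℂ) * S + -S / 2 * r = 0 := by push_cast; ring
    rw [← mul_assoc, ← ofExp_add, hcancel, ofExp_zero, one_mul]

lemma eq_exp_halfDiff_snoc_zero {m : ℕ} {y : ℕ → ℝ} {x : Fin m → ℝ}
    (hy : ∀ j : Fin m, y j = Real.exp (halfDiff m x j)) (hlast : y m = 1) (j : Fin (m + 1)) :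
    y j = Real.exp (halfDiff (m + 1) (Fin.snoc x 0) j) := by
  rw [halfDiff_snoc_zero]
  refine Fin.lastCases ?_ (fun i => ?_) j
  · rw [Fin.snoc_last, Real.exp_zero, Fin.val_last, hlast]
  · rw [Fin.snoc_castSucc, Fin.val_castSucc, hy]

lemma prod_mul_prod_cpow_div {m : ℕ} (s : ℂ) (x : Fin m → ℝ) :
    (∏ j, (Real.exp (halfDiff m x j) : ℂ)) * ∏ j ∈ Finset.range m,
        (extR (fun j => Real.exp (halfDiff m x j)) j : ℂ) ^ (((j + 1 : ℕ) : ℂ) * s) /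
          (extR (fun j => Real.exp (halfDiff m x j)) j : ℂ) =
      exp (s / 2 * ((∑ j, x j : ℝ) : ℂ)) := by
  have hne (j : Fin m) : (Real.exp (halfDiff m x j) : ℂ) ≠ 0 :=
    ofReal_ne_zero.2 (Real.exp_ne_zero _)
  simp only [Finset.prod_range, extR_coe]
  rw [← Finset.prod_mul_distrib, Finset.prod_congr rfl fun j _ => mul_div_cancel₀ _ (hne j)]
  simp only [ofReal_exp_cpow]
  have hsum := congrArg ofReal (sum_succ_mul_halfDiff x)
  rw [← exp_sum]
  push_cast at hsum ⊢
  rw [div_mul_eq_mul_div, mul_div_assoc, ← hsum, Finset.mul_sum]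
  exact congrArg exp (Finset.sum_congr rfl fun j _ => by ring)

theorem evaluatesTo_zetaGLm (m : ℕ) (a a' : ℕ → ℂ) (s : ℂ) :
    (whittakerPairing m a fun k => a' k + s).EvaluatesTo (zetaGLm (m + 2) m a a' s) := by
  rw [zetaGLm, integral_posSet, ← integral_comp_halfDiff]
  refine EvaluatesTo.majIntegral (by fun_prop) fun x => ?_
  set y := extR fun j => Real.exp (halfDiff m x j)
  have hy (j : Fin m) : y j = Real.exp (halfDiff m x j) := extR_coe _ j
  have hysnoc := eq_exp_halfDiff_snoc_zero hy (extR_self _)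
  have hysnoc₂ := eq_exp_halfDiff_snoc_zero hysnoc (by simp [y, extR])
  rw [mul_left_comm, prod_mul_prod_cpow_div, whittaker_add_const, mul_comm (ofExp _), ← mul_assoc]
  exact ((evaluatesTo_WhittAhat _ a hysnoc₂).mul (evaluatesTo_WhittAhat m a' hy)).mul
    (evaluatesTo_ofExp _)

theorem gl_glnminus2_zeta_general (n : ℕ) (hn : 2 ≤ n) (a a' : ℕ → ℂ) (s : ℂ) (c : ℝ)
    (h : ∀ j < n, ∀ k < n - 2, 0 < (s + a j + a' k).re)
    (hc : ∀ j < n, 0 < ((c : ℂ) - a j).re) :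
    zetaGLm n (n - 2) a a' s =
      (∏ j ∈ Finset.range n, ∏ k ∈ Finset.range (n - 2), GammaR (s + a j + a' k)) *
        ((4 * (Real.pi : ℂ) * Complex.I)⁻¹ *
          VInt c (fun w =>
            (∏ j ∈ Finset.range n, GammaR (w - a j)) /
              ∏ j ∈ Finset.range (n - 2), GammaR (s + w + a' j))) := by
  obtain ⟨m, rfl⟩ := Nat.exists_eq_add_of_le' hn
  rw [Nat.add_sub_cancel] at h ⊢
  have hassoc (z : ℂ) (k : ℕ) : s + z + a' k = z + (a' k + s) := by ring
  simp only [hassoc] at h ⊢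
  obtain ⟨hfin, hval⟩ := whittakerPairing_eval m h hc
  rw [← evaluatesTo_zetaGLm m a a' s hfin, hval, VInt, mul_inv _ I, mul_assoc _ I⁻¹,
    inv_mul_cancel_left₀ I_ne_zero]

/-- Evaluation of the archimedean `GL_n × GL_{n-2}` zeta integral: the local
`L`-factor times a single Barnes integral (Theorem 2.3 of Ishii–Stade). -/
theorem gl_glnminus2_zeta (n : ℕ) (hn : 3 ≤ n)
    (a a' : ℕ → ℂ) (ha : ∀ j < n, (a j).re = 0) (ha' : ∀ k < n - 2, (a' k).re = 0)
    (s : ℂ) (hs : 0 < s.re) (c : ℝ)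
    (hc1 : ∀ j < n, 0 < ((c : ℂ) - a j).re)
    (hc2 : ∀ j < n - 2, 0 < (s + (c : ℂ) + a' j).re) :
    zetaGLm n (n - 2) a a' s =
      (∏ j ∈ Finset.range n, ∏ k ∈ Finset.range (n - 2), GammaR (s + a j + a' k)) *
        ((4 * (Real.pi : ℂ) * Complex.I)⁻¹ *
          VInt c (fun w =>
            (∏ j ∈ Finset.range n, GammaR (w - a j)) /
              ∏ j ∈ Finset.range (n - 2), GammaR (s + w + a' j))) :=
  gl_glnminus2_zeta_general n (by omega) a a' s c
    (fun j hj k hk => by simpa [ha j hj, ha' k hk] using hs) hc1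

end
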